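/- arXiv:2410.05929 — 2 statements merged into one kernel-verified Lean document; each statement's English description precedes it below -/
import Mathlib

section
/- Let φ : ℝ → ℝ be infinitely differentiable with φ(θ + 2π) = φ(θ) + 2π and φ′(θ) > 0 for all θ. Then there exists an infinitely differentiable function K : ℝ × ℝ → ℂ, 2π-periodic in each variable, such that for all θ, σ ∈ ℝ with e^{iθ} ≠ e^{iσ}: K(θ, σ) = (i e^{iσ})/(e^{iσ} − e^{iθ}) − (i φ′(σ) e^{iφ(σ)})/(e^{iφ(σ)} − e^{iφ(θ)}). (That is, the singularities of the two terms along the diagonal cancel exactly, so the integral kernel of T − V_φ T V_φ^{−1} is smooth, where T is the Hilbert transform and V_φ is precomposition with the circle diffeomorphism induced by φ.) -/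
open Set Complex Real

/-! The divided differences of a smooth function extend smoothly across the diagonal, as averages
of the derivative. Hence, for two regular simple closed curves `γ` and `η`, the ratio
`J(θ, σ) = (η σ - η θ) / (γ σ - γ θ)` extends to a smooth, doubly periodic, nowhere vanishing
function, and `γ'(σ) / (γ σ - γ θ) - η'(σ) / (η σ - η θ)` is minus the logarithmic derivative of
`J` in `σ`. The welding kernel is the case where `γ` is the unit circle and `η` is its
reparametrization by `φ`. -/

section ParametricIntegral

variable {H E : Type*} [NormedAddCommGroup H] [NormedSpace ℝ H] [ProperSpace H]
  [NormedAddCommGroup E] [NormedSpace ℝ E]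

theorem hasFDerivAt_intervalIntegral_of_contDiff_one {f : H × ℝ → E} (hf : ContDiff ℝ 1 f)
    (a b : ℝ) (x₀ : H) :
    HasFDerivAt (fun x => ∫ t in a..b, f (x, t))
      (∫ t in a..b, (fderiv ℝ f (x₀, t)).comp (ContinuousLinearMap.inl ℝ H ℝ)) x₀ := by
  have hcont : Continuous f := hf.continuous
  have hcont' : Continuous fun p : H × ℝ =>
      (fderiv ℝ f p).comp (ContinuousLinearMap.inl ℝ H ℝ) :=
    (hf.continuous_fderiv one_ne_zero).clm_comp continuous_const
  obtain ⟨C, hC⟩ := ((isCompact_closedBall x₀ 1).prod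
    (isCompact_uIcc (a := a) (b := b))).exists_bound_of_continuousOn hcont'.continuousOn
  refine intervalIntegral.hasFDerivAt_integral_of_dominated_of_fderiv_le
    (bound := fun _ => C)
    (F' := fun x t => (fderiv ℝ f (x, t)).comp (ContinuousLinearMap.inl ℝ H ℝ))
    (Metric.closedBall_mem_nhds x₀ one_pos)
    (.of_forall fun x => (hcont.comp (.prodMk_right x)).aestronglyMeasurable)
    ((hcont.comp (.prodMk_right x₀)).intervalIntegrable a b)
    (hcont'.comp (.prodMk_right x₀)).aestronglyMeasurable
    (.of_forall fun t ht x hx => hC (x, t) ⟨hx, uIoc_subset_uIcc ht⟩)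
    intervalIntegrable_const
    (.of_forall fun t _ x _ => ?_)
  exact (hf.differentiable one_ne_zero (x, t)).hasFDerivAt.comp x (hasFDerivAt_prodMk_left x t)

end ParametricIntegral

/- The universe of `E` contains that of `H` so that the induction can replace `E` by `H →L[ℝ] E`. -/
theorem contDiff_nat_intervalIntegral.{u, v} {H : Type u} [NormedAddCommGroup H] [NormedSpace ℝ H]
    [ProperSpace H] (n : ℕ) (a b : ℝ) {E : Type (max u v)} [NormedAddCommGroup E]
    [NormedSpace ℝ E] {f : H × ℝ → E} (hf : ContDiff ℝ n f) :
    ContDiff ℝ n fun x => ∫ t in a..b, f (x, t) := by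
  induction n generalizing E with
  | zero =>
    exact contDiff_zero.2 <|
      intervalIntegral.continuous_parametric_intervalIntegral_of_continuous'
        (f := fun x t => f (x, t)) hf.continuous a b
  | succ n ih =>
    have hf' : ContDiff ℝ n fun p : H × ℝ =>
        (fderiv ℝ f p).comp (ContinuousLinearMap.inl ℝ H ℝ) :=
      (hf.fderiv_right (by simp)).clm_comp contDiff_const
    exact contDiff_succ_iff_hasFDerivAt.2 ⟨_, ih hf', fun x =>
      hasFDerivAt_intervalIntegral_of_contDiff_one (hf.of_le (by simp)) a b x⟩

theorem contDiff_intervalIntegral.{u, v} {H : Type u} [NormedAddCommGroup H] [NormedSpace ℝ H]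
    [ProperSpace H] {E : Type (max u v)} [NormedAddCommGroup E] [NormedSpace ℝ E] {n : ℕ∞}
    {f : H × ℝ → E} (hf : ContDiff ℝ n f) (a b : ℝ) :
    ContDiff ℝ n fun x => ∫ t in a..b, f (x, t) :=
  contDiff_iff_forall_nat_le.2 fun m hm =>
    contDiff_nat_intervalIntegral.{u, v} m a b (hf.of_le (by exact_mod_cast hm))

section Derivatives

variable {𝕜 : Type*} [NontriviallyNormedField 𝕜]

theorem periodic_deriv {E : Type*} [NormedAddCommGroup E] [NormedSpace 𝕜 E] {f : 𝕜 → E} {T : 𝕜}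
    (hf : f.Periodic T) : (deriv f).Periodic T := fun x => by
  rw [← deriv_comp_add_const, funext hf]

variable {𝕜' : Type*} [NontriviallyNormedField 𝕜'] [NormedAlgebra 𝕜 𝕜']

theorem periodic_logDeriv {f : 𝕜 → 𝕜'} {T : 𝕜} (hf : f.Periodic T) :
    (logDeriv f).Periodic T := fun x => by
  rw [logDeriv_apply, logDeriv_apply, periodic_deriv hf, hf]

theorem contDiff_logDeriv_right {H : Type*} [NormedAddCommGroup H] [NormedSpace 𝕜 H]
    {n : WithTop ℕ∞} {F : H → 𝕜 → 𝕜'} (hF : ContDiff 𝕜 (n + 1) F.uncurry)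
    (h0 : ∀ x y, F x y ≠ 0) : ContDiff 𝕜 n fun p : H × 𝕜 => logDeriv (F p.1) p.2 := by
  have hderiv : ContDiff 𝕜 n fun p : H × 𝕜 => deriv (F p.1) p.2 :=
    ContDiff.fderiv_apply (f := fun p : H × 𝕜 => F p.1)
      (hF.comp (by fun_prop : ContDiff 𝕜 (n + 1) fun q : (H × 𝕜) × 𝕜 => (q.1.1, q.2)))
      contDiff_snd contDiff_const le_rfl
  have hinv : ContDiff 𝕜 n fun p : H × 𝕜 => (F p.1 p.2)⁻¹ :=
    (hF.of_le le_self_add).inv fun p => h0 p.1 p.2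
  simpa only [logDeriv_apply, div_eq_mul_inv] using hderiv.mul hinv

end Derivatives

section HadamardQuotient

variable {E : Type*} [NormedAddCommGroup E] [NormedSpace ℝ E]

/-- Hadamard's form of the divided difference `(f y - f x) / (y - x)`: the average of `f'` over the
segment from `x` to `y`, which also makes sense for `x = y`. -/
noncomputable def hadamardQuotient (f : ℝ → E) (x y : ℝ) : E :=
  ∫ t in (0 : ℝ)..1, deriv f (x + t * (y - x))

theorem hadamardQuotient_self [CompleteSpace E] (f : ℝ → E) (x : ℝ) :
    hadamardQuotient f x x = deriv f x := by
  simp [hadamardQuotient]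

theorem sub_smul_hadamardQuotient [CompleteSpace E] {f : ℝ → E} (hf : ContDiff ℝ 1 f) (x y : ℝ) :
    (y - x) • hadamardQuotient f x y = f y - f x := by
  have h := intervalIntegral.integral_unitInterval_deriv_eq_sub (z₀ := x) (z₁ := y - x)
    (f := f) (f' := deriv f) (hf.continuous_deriv_one.comp (by fun_prop)).continuousOn
    fun t _ => (hf.differentiable one_ne_zero _).hasDerivAt
  simpa only [hadamardQuotient, smul_eq_mul, add_sub_cancel] using h

theorem contDiff_hadamardQuotient {n : ℕ∞} {f : ℝ → E} (hf : ContDiff ℝ (n + 1) f) :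
    ContDiff ℝ n fun p : ℝ × ℝ => hadamardQuotient f p.1 p.2 := by
  refine contDiff_intervalIntegral
    (f := fun q : (ℝ × ℝ) × ℝ => deriv f (q.1.1 + q.2 * (q.1.2 - q.1.1))) ?_ 0 1
  exact hf.deriv'.comp (by fun_prop)

end HadamardQuotient

section SlopeRatio

variable {γ η : ℝ → ℂ} {θ σ T : ℝ} {n : ℕ∞}

open Classical in
/-- The ratio of the divided differences of `η` and `γ` between `θ` and `σ`. Where `γ θ = γ σ` it
takes the value at `(σ, σ)` of the continuous extension, which is the limit at `(θ, σ)` as well when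
`γ` and `η` are periodic and `σ - θ` is a period. -/
noncomputable def slopeRatio (γ η : ℝ → ℂ) (θ σ : ℝ) : ℂ :=
  if γ θ = γ σ then deriv η σ / deriv γ σ else (η σ - η θ) / (γ σ - γ θ)

theorem slopeRatio_of_eq (h : γ θ = γ σ) : slopeRatio γ η θ σ = deriv η σ / deriv γ σ :=
  if_pos h

theorem slopeRatio_of_ne (h : γ θ ≠ γ σ) : slopeRatio γ η θ σ = (η σ - η θ) / (γ σ - γ θ) :=
  if_neg h

theorem periodic_slopeRatio (hγ : γ.Periodic T) (hη : η.Periodic T) :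
    (slopeRatio γ η).Periodic T := fun θ => by
  funext σ
  simp only [slopeRatio, hγ θ, hη θ]

theorem periodic_slopeRatio_right (hγ : γ.Periodic T) (hη : η.Periodic T) (θ : ℝ) :
    (slopeRatio γ η θ).Periodic T := fun σ => by
  simp only [slopeRatio, hγ σ, hη σ, periodic_deriv hγ σ, periodic_deriv hη σ]

theorem slopeRatio_eq_hadamardQuotient_div (hγ : ContDiff ℝ 1 γ) (hη : ContDiff ℝ 1 η)
    (h : hadamardQuotient γ θ σ ≠ 0) :
    slopeRatio γ η θ σ = hadamardQuotient η θ σ / hadamardQuotient γ θ σ := by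
  have hγθσ := sub_smul_hadamardQuotient hγ θ σ
  have hηθσ := sub_smul_hadamardQuotient hη θ σ
  by_cases heq : γ θ = γ σ
  · obtain rfl : σ = θ := by
      rw [heq, sub_self, smul_eq_zero, sub_eq_zero] at hγθσ
      exact hγθσ.resolve_right h
    rw [slopeRatio_of_eq heq, hadamardQuotient_self, hadamardQuotient_self]
  · have hsub : ((σ - θ : ℝ) : ℂ) ≠ 0 := by
      rw [ofReal_ne_zero, sub_ne_zero]
      rintro rfl
      exact heq rfl
    rw [slopeRatio_of_ne heq, ← hγθσ, ← hηθσ, real_smul, real_smul, mul_div_mul_left _ _ hsub]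

theorem contDiffAt_slopeRatio_self (hγ : ContDiff ℝ (n + 1) γ) (hη : ContDiff ℝ (n + 1) η)
    (hσ : deriv γ σ ≠ 0) :
    ContDiffAt ℝ n (fun p : ℝ × ℝ => slopeRatio γ η p.1 p.2) (σ, σ) := by
  have hQγ := contDiff_hadamardQuotient hγ
  have hQη := contDiff_hadamardQuotient hη
  have hne : hadamardQuotient γ σ σ ≠ 0 := by rwa [hadamardQuotient_self]
  have hquot := (hQη.contDiffAt (x := (σ, σ))).mul (hQγ.contDiffAt.inv hne)
  refine hquot.congr_of_eventuallyEq ?_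
  filter_upwards [hQγ.continuous.continuousAt.eventually_ne hne] with p hp
  rw [slopeRatio_eq_hadamardQuotient_div (hγ.of_le (by simp)) (hη.of_le (by simp)) hp]
  exact div_eq_mul_inv _ _

theorem contDiffAt_slopeRatio_of_ne (hγ : ContDiff ℝ n γ) (hη : ContDiff ℝ n η)
    (h : γ θ ≠ γ σ) :
    ContDiffAt ℝ n (fun p : ℝ × ℝ => slopeRatio γ η p.1 p.2) (θ, σ) := by
  have hγfst : ContDiff ℝ n fun p : ℝ × ℝ => γ p.1 := hγ.comp contDiff_fst
  have hγsnd : ContDiff ℝ n fun p : ℝ × ℝ => γ p.2 := hγ.comp contDiff_snd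
  have hηsub : ContDiff ℝ n fun p : ℝ × ℝ => η p.2 - η p.1 :=
    (hη.comp contDiff_snd).sub (hη.comp contDiff_fst)
  have hquot := (hηsub.contDiffAt (x := (θ, σ))).mul
    ((hγsnd.sub hγfst).contDiffAt.inv (sub_ne_zero.2 h.symm))
  refine hquot.congr_of_eventuallyEq ?_
  filter_upwards [(isOpen_ne_fun hγfst.continuous hγsnd.continuous).mem_nhds h] with p hp
  rw [slopeRatio_of_ne hp]
  exact div_eq_mul_inv _ _

end SlopeRatio

/-- A parametrization, of period `T`, of a simple closed curve in the plane by a map with nowhere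
vanishing derivative. For `T = 0` this is a parametrization of a simple open arc. -/
structure IsRegularSimpleClosedCurve (T : ℝ) (γ : ℝ → ℂ) : Prop where
  eq_iff_modEq : ∀ x y, γ x = γ y ↔ x ≡ y [PMOD T]
  deriv_ne_zero : ∀ x, deriv γ x ≠ 0

namespace IsRegularSimpleClosedCurve

variable {γ η : ℝ → ℂ} {θ σ T : ℝ} {n : ℕ∞}

theorem periodic (hγ : IsRegularSimpleClosedCurve T γ) : γ.Periodic T := fun _ =>
  (hγ.eq_iff_modEq _ _).2 (AddCommGroup.add_modEq_left.2 AddCommGroup.self_modEq_zero)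

theorem eq_iff_eq (hγ : IsRegularSimpleClosedCurve T γ) (hη : IsRegularSimpleClosedCurve T η) :
    γ θ = γ σ ↔ η θ = η σ :=
  (hγ.eq_iff_modEq θ σ).trans (hη.eq_iff_modEq θ σ).symm

theorem comp (hγ : IsRegularSimpleClosedCurve T γ) {φ : ℝ → ℝ}
    (hφ : ∀ x y, φ x ≡ φ y [PMOD T] ↔ x ≡ y [PMOD T]) (hφ' : ∀ x, deriv φ x ≠ 0) :
    IsRegularSimpleClosedCurve T (γ ∘ φ) where
  eq_iff_modEq x y := (hγ.eq_iff_modEq _ _).trans (hφ x y)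
  deriv_ne_zero x := by
    rw [deriv.scomp x (differentiableAt_of_deriv_ne_zero (hγ.deriv_ne_zero _))
      (differentiableAt_of_deriv_ne_zero (hφ' x))]
    exact smul_ne_zero (hφ' x) (hγ.deriv_ne_zero _)

theorem slopeRatio_ne_zero (hγ : IsRegularSimpleClosedCurve T γ)
    (hη : IsRegularSimpleClosedCurve T η) (θ σ : ℝ) : slopeRatio γ η θ σ ≠ 0 := by
  by_cases h : γ θ = γ σ
  · rw [slopeRatio_of_eq h]
    exact div_ne_zero (hη.deriv_ne_zero σ) (hγ.deriv_ne_zero σ)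
  · rw [slopeRatio_of_ne h]
    exact div_ne_zero (sub_ne_zero.2 fun h' => h ((hγ.eq_iff_eq hη).2 h'.symm))
      (sub_ne_zero.2 (Ne.symm h))

theorem sub_mul_slopeRatio (hγ : IsRegularSimpleClosedCurve T γ)
    (hη : IsRegularSimpleClosedCurve T η) (θ σ : ℝ) :
    (γ σ - γ θ) * slopeRatio γ η θ σ = η σ - η θ := by
  by_cases h : γ θ = γ σ
  · rw [h, (hγ.eq_iff_eq hη).1 h, sub_self, sub_self, zero_mul]
  · rw [slopeRatio_of_ne h, mul_div_cancel₀ _ (sub_ne_zero.2 (Ne.symm h))]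

theorem contDiff_slopeRatio (hγ : IsRegularSimpleClosedCurve T γ) (hη : η.Periodic T)
    (hγn : ContDiff ℝ (n + 1) γ) (hηn : ContDiff ℝ (n + 1) η) :
    ContDiff ℝ n fun p : ℝ × ℝ => slopeRatio γ η p.1 p.2 := by
  rw [contDiff_iff_contDiffAt]
  rintro ⟨θ, σ⟩
  by_cases h : γ θ = γ σ
  · obtain ⟨m, rfl⟩ := AddCommGroup.modEq_iff_eq_add_zsmul.1 ((hγ.eq_iff_modEq θ σ).1 h)
    have hshift : (fun p : ℝ × ℝ => slopeRatio γ η p.1 p.2) =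
        (fun p : ℝ × ℝ => slopeRatio γ η p.1 p.2) ∘ fun p => (p.1 + m • T, p.2) := by
      funext p
      simp only [Function.comp_apply, (periodic_slopeRatio hγ.periodic hη).zsmul m p.1]
    rw [hshift]
    exact (contDiffAt_slopeRatio_self hγn hηn (hγ.deriv_ne_zero _)).comp (θ, θ + m • T)
      (by fun_prop)
  · exact contDiffAt_slopeRatio_of_ne (hγn.of_le (by simp)) (hηn.of_le (by simp)) h

theorem logDeriv_slopeRatio (hγ : IsRegularSimpleClosedCurve T γ)
    (hη : IsRegularSimpleClosedCurve T η)
    (hJ : DifferentiableAt ℝ (slopeRatio γ η θ) σ) (h : γ θ ≠ γ σ) :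
    logDeriv (slopeRatio γ η θ) σ =
      deriv η σ / (η σ - η θ) - deriv γ σ / (γ σ - γ θ) := by
  have hdγ : DifferentiableAt ℝ (fun x => γ x - γ θ) σ :=
    (differentiableAt_of_deriv_ne_zero (hγ.deriv_ne_zero σ)).sub_const _
  have hmul := logDeriv_mul (g := slopeRatio γ η θ) σ (sub_ne_zero.2 h.symm)
    (hγ.slopeRatio_ne_zero hη θ σ) hdγ hJ
  rw [funext (hγ.sub_mul_slopeRatio hη θ), logDeriv_apply, logDeriv_apply, deriv_sub_const,
    deriv_sub_const] at hmul
  exact eq_sub_of_add_eq' hmul.symm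

end IsRegularSimpleClosedCurve

theorem welding_kernel_is_smooth_general {n : ℕ∞} {T : ℝ} {γ η : ℝ → ℂ}
    (hγ : IsRegularSimpleClosedCurve T γ) (hη : IsRegularSimpleClosedCurve T η)
    (hγn : ContDiff ℝ (n + 2) γ) (hηn : ContDiff ℝ (n + 2) η) :
    ∃ K : ℝ × ℝ → ℂ,
      ContDiff ℝ n K ∧
      (∀ θ σ : ℝ, K (θ + T, σ) = K (θ, σ)) ∧
      (∀ θ σ : ℝ, K (θ, σ + T) = K (θ, σ)) ∧
      (∀ θ σ : ℝ, γ θ ≠ γ σ →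
        K (θ, σ) = deriv γ σ / (γ σ - γ θ) - deriv η σ / (η σ - η θ)) := by
  have hn : ((n + 1 : ℕ∞) : WithTop ℕ∞) + 1 = n + 2 := by
    push_cast
    rw [add_assoc, one_add_one_eq_two]
  have hJ : ContDiff ℝ (n + 1) (slopeRatio γ η).uncurry := by
    exact_mod_cast hγ.contDiff_slopeRatio hη.periodic (hn ▸ hγn) (hn ▸ hηn)
  refine ⟨fun p => -logDeriv (slopeRatio γ η p.1) p.2,
    (contDiff_logDeriv_right hJ (hγ.slopeRatio_ne_zero hη)).neg, fun θ σ => ?_, fun θ σ => ?_,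
    fun θ σ h => ?_⟩
  · simp only [periodic_slopeRatio hγ.periodic hη.periodic θ]
  · simp only [periodic_logDeriv (periodic_slopeRatio_right hγ.periodic hη.periodic θ) σ]
  · have hdiff : DifferentiableAt ℝ (slopeRatio γ η θ) σ :=
      ((hJ.differentiable (by simp)).comp
        (by fun_prop : Differentiable ℝ fun x : ℝ => (θ, x))) σ
    simp only [hγ.logDeriv_slopeRatio hη hdiff h, neg_sub]

theorem isRegularSimpleClosedCurve_circleMap (c : ℂ) {R : ℝ} (hR : R ≠ 0) :
    IsRegularSimpleClosedCurve (2 * π) (circleMap c R) where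
  eq_iff_modEq x y := by
    rw [← Circle.exp_inj, ← Circle.coe_inj, Circle.coe_exp, Circle.coe_exp, circleMap, circleMap,
      add_right_inj, mul_right_inj' (ofReal_ne_zero.2 hR)]
  deriv_ne_zero _ := deriv_circleMap_ne_zero hR

theorem modEq_iff_modEq_of_injective {G H : Type*} [AddCommGroup G] [AddCommGroup H] {φ : G → H}
    {a : G} {b : H} (hφ : ∀ x, φ (x + a) = φ x + b) (hinj : Function.Injective φ) (x y : G) :
    φ x ≡ φ y [PMOD b] ↔ x ≡ y [PMOD a] := by
  have hshift : ∀ m : ℤ, φ (x + m • a) = φ x + m • b :=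
    AddConstMapClass.map_add_zsmul (⟨φ, hφ⟩ : AddConstMap G H a b) x
  simp only [AddCommGroup.modEq_iff_eq_add_zsmul, ← hshift, hinj.eq_iff]

theorem welding_kernel_is_smooth
    (φ : ℝ → ℝ) (hφ : ContDiff ℝ (⊤ : ℕ∞) φ)
    (hper : ∀ θ, φ (θ + 2 * π) = φ θ + 2 * π)
    (hpos : ∀ θ, 0 < deriv φ θ) :
    ∃ K : ℝ × ℝ → ℂ,
      ContDiff ℝ (⊤ : ℕ∞) K ∧
      (∀ θ σ : ℝ, K (θ + 2 * π, σ) = K (θ, σ)) ∧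
      (∀ θ σ : ℝ, K (θ, σ + 2 * π) = K (θ, σ)) ∧
      (∀ θ σ : ℝ, Complex.exp (θ * Complex.I) ≠ Complex.exp (σ * Complex.I) →
        K (θ, σ) =
          Complex.I * Complex.exp (σ * Complex.I) /
            (Complex.exp (σ * Complex.I) - Complex.exp (θ * Complex.I)) -
          Complex.I * (Complex.ofReal (deriv φ σ)) * Complex.exp ((φ σ : ℂ) * Complex.I) /
            (Complex.exp ((φ σ : ℂ) * Complex.I) - Complex.exp ((φ θ : ℂ) * Complex.I))) := by
  have hcircle := isRegularSimpleClosedCurve_circleMap 0 one_ne_zero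
  have hlift := modEq_iff_modEq_of_injective hper (strictMono_of_deriv_pos hpos).injective
  have hderiv (σ : ℝ) : deriv (circleMap 0 1 ∘ φ) σ = I * deriv φ σ * exp (φ σ * I) := by
    rw [deriv.scomp σ (differentiable_circleMap 0 1 _) (hφ.differentiable (by simp) σ),
      deriv_circleMap, circleMap_zero, real_smul, ofReal_one, one_mul]
    ring
  simpa only [hderiv, deriv_circleMap, Function.comp_apply, circleMap_zero, ofReal_one, one_mul,
    mul_comm _ I] using welding_kernel_is_smooth_general (n := ⊤) hcircle
      (hcircle.comp hlift fun θ => (hpos θ).ne') (contDiff_circleMap 0 1)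
      ((contDiff_circleMap 0 1).comp hφ)
end

section
/- With γ_in, γ_out, B_in, B_out and the associated annulus A as in the context, let f : A → ℂ be continuous, complex-differentiable at every point of the interior of A, and such that θ ↦ f(γ_in(θ)) and θ ↦ f(γ_out(θ)) are infinitely differentiable on ℝ. Then there exists an infinitely differentiable function F : ℂ → ℂ (ContDiff ℝ ⊤, viewing ℂ as ℝ²) whose restriction to A equals f. -/
open Set Complex Real

/-!
Near a boundary point each boundary curve is straightened by an almost analytic diffeomorphism, so
`f` restricted to the curve has a smooth extension `φ` across it with `∂̄φ` flat along the curve.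
Replace `f` by `φ` in the complementary component `B` bounded by the curve. The result `h` is only
continuous, but its `∂̄`-derivative off the curves is `∂̄φ` on `B` and `0` elsewhere, which is
smooth by flatness. Hence `∂̄v` equals this function for some smooth `v`, by the Cauchy transform,
and `h - v` is continuous and holomorphic off the curves. Smooth curves are removable for
continuous functions, so `h - v` is holomorphic and `h` is smooth. These local extensions of `f`
are glued by a partition of unity.

Removability of a curve is proved through antiderivatives: in the straightened coordinates the
one-form `H dz` is closed on both sides of the real line and continuous across it, so it has a
primitive, and `H` is the derivative of a holomorphic function.
-/

section Flatness

open Filter Topology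

variable {D E F : Type*} [NormedAddCommGroup D] [NormedSpace ℝ D] [NormedAddCommGroup E]
  [NormedSpace ℝ E] [NormedAddCommGroup F] [NormedSpace ℝ F]

/-- `q` is flat at `z`: it vanishes there to infinite order. The condition is meaningful only where
`q` is smooth, since `iteratedFDeriv` is zero at a point where the derivative does not exist. -/
def FlatAt (q : E → F) (z : E) : Prop :=
  ∀ n : ℕ, iteratedFDeriv ℝ n q z = 0

theorem FlatAt.congr {q r : E → F} {z : E} (hq : FlatAt q z) (h : q =ᶠ[𝓝 z] r) : FlatAt r z :=
  fun n => by rw [← (h.iteratedFDeriv ℝ n).self_of_nhds, hq n]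

theorem FlatAt.eq_zero {q : E → F} {z : E} (hq : FlatAt q z) : q z = 0 := by
  simpa using congrArg (fun L => L 0) (hq 0)

theorem flatAt_of_notMem_tsupport {q : E → F} {z : E} (hz : z ∉ tsupport q) : FlatAt q z :=
  fun n => image_eq_zero_of_notMem_tsupport fun h => hz (tsupport_iteratedFDeriv_subset n h)

theorem FlatAt.sub {q r : E → F} {z : E} (hq : FlatAt q z) (hr : FlatAt r z)
    (hq' : ContDiffAt ℝ (⊤ : ℕ∞) q z) (hr' : ContDiffAt ℝ (⊤ : ℕ∞) r z) :
    FlatAt (fun w => q w - r w) z := fun n => by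
  rw [fun_iteratedFDeriv_sub_apply (hq'.of_le (mod_cast le_top)) (hr'.of_le (mod_cast le_top)),
    hq n, hr n, sub_zero]

theorem FlatAt.mul {A : Type*} [NormedRing A] [NormedAlgebra ℝ A] {q r : E → A} {z : E}
    (hq : FlatAt q z) (hq' : ContDiffAt ℝ (⊤ : ℕ∞) q z) (hr' : ContDiffAt ℝ (⊤ : ℕ∞) r z) :
    FlatAt (fun w => q w * r w) z := fun n => by
  obtain ⟨u, hu, hzu, hqu, hru⟩ : ∃ u, IsOpen u ∧ z ∈ u ∧ ContDiffOn ℝ n q u ∧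
      ContDiffOn ℝ n r u := by
    have hq'' := (hq'.of_le (m := n) (mod_cast le_top)).eventually (by simp)
    have hr'' := (hr'.of_le (m := n) (mod_cast le_top)).eventually (by simp)
    obtain ⟨u, hqr, hu, hzu⟩ := eventually_nhds_iff.1 (hq''.and hr'')
    exact ⟨u, hu, hzu, fun w hw => (hqr w hw).1.contDiffWithinAt,
      fun w hw => (hqr w hw).2.contDiffWithinAt⟩
  have leibniz := norm_iteratedFDerivWithin_mul_le hqu hru hu.uniqueDiffOn hzu le_rfl
  rw [iteratedFDerivWithin_of_isOpen n hu hzu] at leibniz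
  refine norm_le_zero_iff.1 (leibniz.trans_eq (Finset.sum_eq_zero fun i _ => ?_))
  rw [iteratedFDerivWithin_of_isOpen i hu hzu, hq i, norm_zero, mul_zero, zero_mul]

theorem FlatAt.comp {q : E → F} {e : D → E} {z : D} (hq : FlatAt q (e z))
    (hq' : ContDiffAt ℝ (⊤ : ℕ∞) q (e z)) (he : ContDiffAt ℝ (⊤ : ℕ∞) e z) :
    FlatAt (q ∘ e) z := fun n => by
  rw [iteratedFDeriv_comp hq' he (i := n) (mod_cast le_top)]
  refine Finset.sum_eq_zero fun c _ => ?_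
  ext v
  simp [FormalMultilinearSeries.compAlongOrderedFinpartition_apply, ftaylorSeries, hq c.length]

theorem hasFDerivAt_indicator {S : Set E} {q : E → F} {q' : E → E →L[ℝ] F} {z : E}
    (hq : HasFDerivAt q (q' z) z) (hS : z ∈ frontier S → q z = 0 ∧ q' z = 0) :
    HasFDerivAt (S.indicator q) (S.indicator q' z) z := by
  by_cases hz : z ∈ frontier S
  · obtain ⟨hqz, hq'z⟩ := hS hz
    have hval : S.indicator q z = 0 := by by_cases h : z ∈ S <;> simp [h, hqz]
    have hder : S.indicator q' z = 0 := by by_cases h : z ∈ S <;> simp [h, hq'z]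
    rw [hq'z, hasFDerivAt_iff_isLittleO] at hq
    rw [hder, hasFDerivAt_iff_isLittleO]
    refine (Asymptotics.isBigO_of_le _ fun w => ?_).trans_isLittleO hq
    simpa [hqz, hval] using norm_indicator_le_norm_self q w
  · rw [frontier_eq_closure_inter_closure, mem_inter_iff, not_and_or] at hz
    rcases hz with hz | hz
    · have hzS : Sᶜ ∈ 𝓝 z := by rwa [← mem_interior_iff_mem_nhds, interior_compl]
      rw [indicator_of_notMem (mem_of_mem_nhds hzS)]
      refine (hasFDerivAt_const (0 : F) z).congr_of_eventuallyEq ?_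
      filter_upwards [hzS] with w hw using indicator_of_notMem hw q
    · have hzS : S ∈ 𝓝 z := by
        rwa [← mem_interior_iff_mem_nhds, ← compl_compl S, interior_compl]
      rw [indicator_of_mem (mem_of_mem_nhds hzS)]
      refine hq.congr_of_eventuallyEq ?_
      filter_upwards [hzS] with w hw using indicator_of_mem hw q

theorem fderiv_indicator {S : Set E} {q : E → F} (hq : Differentiable ℝ q)
    (hS : ∀ z ∈ frontier S, q z = 0 ∧ fderiv ℝ q z = 0) :
    fderiv ℝ (S.indicator q) = S.indicator (fderiv ℝ q) :=
  funext fun z => (hasFDerivAt_indicator (hq z).hasFDerivAt (hS z)).fderiv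

theorem FlatAt.fderiv_iteratedFDeriv_eq_zero {q : E → F} {z : E} (hq : FlatAt q z) (n : ℕ) :
    fderiv ℝ (iteratedFDeriv ℝ n q) z = 0 := by
  have h := hq (n + 1)
  rwa [iteratedFDeriv_succ_eq_comp_left, Function.comp_apply,
    LinearIsometryEquiv.map_eq_zero_iff] at h

theorem iteratedFDeriv_indicator {S : Set E} {q : E → F} (hq : ContDiff ℝ (⊤ : ℕ∞) q)
    (hS : ∀ z ∈ frontier S, FlatAt q z) (n : ℕ) :
    iteratedFDeriv ℝ n (S.indicator q) = S.indicator (iteratedFDeriv ℝ n q) := by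
  induction n with
  | zero =>
    ext z v
    by_cases hz : z ∈ S <;> simp [hz]
  | succ n ih =>
    have hd : Differentiable ℝ (iteratedFDeriv ℝ n q) :=
      hq.differentiable_iteratedFDeriv (mod_cast ENat.natCast_lt_top n)
    rw [iteratedFDeriv_succ_eq_comp_left, ih, fderiv_indicator hd
      fun z hz => ⟨hS z hz n, (hS z hz).fderiv_iteratedFDeriv_eq_zero n⟩,
      iteratedFDeriv_succ_eq_comp_left]
    exact (indicator_comp_of_zero (LinearIsometryEquiv.map_zero _)).symm

theorem contDiff_indicator_of_flatAt_frontier {S : Set E} {q : E → F}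
    (hq : ContDiff ℝ (⊤ : ℕ∞) q) (hS : ∀ z ∈ frontier S, FlatAt q z) :
    ContDiff ℝ (⊤ : ℕ∞) (S.indicator q) := by
  refine contDiff_of_differentiable_iteratedFDeriv fun n _ z => ?_
  rw [iteratedFDeriv_indicator hq hS]
  have hd : Differentiable ℝ (iteratedFDeriv ℝ n q) :=
    hq.differentiable_iteratedFDeriv (mod_cast ENat.natCast_lt_top n)
  exact (hasFDerivAt_indicator (hd z).hasFDerivAt
    fun hz => ⟨hS z hz n, (hS z hz).fderiv_iteratedFDeriv_eq_zero n⟩).differentiableAt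

end Flatness

section Wirtinger

open ComplexConjugate

/-- The complex-linear coefficient of a real-linear map: `a` in the decomposition
`L v = a * v + b * conj v`. -/
noncomputable def linearPart : (ℂ →L[ℝ] ℂ) →L[ℝ] ℂ :=
  (2⁻¹ : ℂ) • (ContinuousLinearMap.apply ℝ ℂ 1 - I • ContinuousLinearMap.apply ℝ ℂ I)

/-- The conjugate-linear coefficient of a real-linear map: `b` in the decomposition
`L v = a * v + b * conj v`. It vanishes exactly when `L` is complex linear. -/
noncomputable def antilinearPart : (ℂ →L[ℝ] ℂ) →L[ℝ] ℂ :=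
  (2⁻¹ : ℂ) • (ContinuousLinearMap.apply ℝ ℂ 1 + I • ContinuousLinearMap.apply ℝ ℂ I)

theorem linearPart_apply (L : ℂ →L[ℝ] ℂ) : linearPart L = 2⁻¹ * (L 1 - I * L I) := rfl

theorem antilinearPart_apply (L : ℂ →L[ℝ] ℂ) : antilinearPart L = 2⁻¹ * (L 1 + I * L I) := rfl

theorem apply_eq_linearPart_add_antilinearPart (L : ℂ →L[ℝ] ℂ) (v : ℂ) :
    L v = linearPart L * v + antilinearPart L * conj v := by
  have hv : L v = v.re * L 1 + v.im * L I := by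
    conv_lhs => rw [← re_add_im v]
    rw [show (v.re : ℂ) + v.im * I = v.re • 1 + v.im • I by simp, map_add, map_smul, map_smul,
      real_smul, real_smul]
  rw [hv, linearPart_apply, antilinearPart_apply]
  apply Complex.ext <;> simp <;> ring

theorem antilinearPart_comp (L M : ℂ →L[ℝ] ℂ) :
    antilinearPart (L.comp M) =
      linearPart L * antilinearPart M + antilinearPart L * conj (linearPart M) := by
  rw [antilinearPart_apply (L.comp M), ContinuousLinearMap.comp_apply,
    ContinuousLinearMap.comp_apply, apply_eq_linearPart_add_antilinearPart L (M 1),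
    apply_eq_linearPart_add_antilinearPart L (M I), linearPart_apply M, antilinearPart_apply M]
  simp only [map_mul, map_sub, map_inv₀, map_ofNat, conj_I]
  ring

/-- The Wirtinger derivative `∂φ/∂z`, equal to the complex derivative where `φ` is holomorphic; it
governs `dbar` of a composition. -/
noncomputable def del (φ : ℂ → ℂ) (z : ℂ) : ℂ :=
  linearPart (fderiv ℝ φ z)

/-- The Wirtinger derivative `∂φ/∂z̄`, which measures the failure of `φ` to be holomorphic. -/
noncomputable def dbar (φ : ℂ → ℂ) (z : ℂ) : ℂ :=
  antilinearPart (fderiv ℝ φ z)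

theorem contDiffAt_del {φ : ℂ → ℂ} {z : ℂ} (hφ : ContDiffAt ℝ (⊤ : ℕ∞) φ z) :
    ContDiffAt ℝ (⊤ : ℕ∞) (del φ) z :=
  linearPart.contDiff.contDiffAt.comp z (hφ.fderiv_right le_rfl)

theorem contDiff_del {φ : ℂ → ℂ} (hφ : ContDiff ℝ (⊤ : ℕ∞) φ) : ContDiff ℝ (⊤ : ℕ∞) (del φ) :=
  contDiff_iff_contDiffAt.2 fun _ => contDiffAt_del hφ.contDiffAt

theorem contDiff_dbar {φ : ℂ → ℂ} (hφ : ContDiff ℝ (⊤ : ℕ∞) φ) : ContDiff ℝ (⊤ : ℕ∞) (dbar φ) :=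
  antilinearPart.contDiff.comp (hφ.fderiv_right le_rfl)

theorem dbar_comp {ψ Γ : ℂ → ℂ} {z : ℂ} (hψ : DifferentiableAt ℝ ψ (Γ z))
    (hΓ : DifferentiableAt ℝ Γ z) :
    dbar (ψ ∘ Γ) z = del ψ (Γ z) * dbar Γ z + dbar ψ (Γ z) * conj (del Γ z) := by
  rw [dbar, fderiv_comp z hψ hΓ, antilinearPart_comp, del, dbar, dbar, del]

theorem differentiableAt_complex_iff_dbar_eq_zero {φ : ℂ → ℂ} {z : ℂ} :
    DifferentiableAt ℂ φ z ↔ DifferentiableAt ℝ φ z ∧ dbar φ z = 0 := by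
  rw [differentiableAt_complex_iff_differentiableAt_real, dbar, antilinearPart_apply]
  refine and_congr_right fun _ => ⟨fun h => ?_, fun h => ?_⟩
  · rw [h, smul_eq_mul, ← mul_assoc, I_mul_I]
    ring
  · have h' : fderiv ℝ φ z 1 + I * fderiv ℝ φ z I = 0 := by simpa using h
    rw [smul_eq_mul]
    linear_combination -I * h' + fderiv ℝ φ z I * I_mul_I

theorem dbar_eq_zero_of_differentiableAt {φ : ℂ → ℂ} {z : ℂ} (h : DifferentiableAt ℂ φ z) :
    dbar φ z = 0 :=
  (differentiableAt_complex_iff_dbar_eq_zero.1 h).2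

theorem conj_mul_two_mul_dbar (φ : ℂ → ℂ) (z v : ℂ) :
    conj v * (2 * dbar φ z) = fderiv ℝ φ z v + I * fderiv ℝ φ z (I * v) := by
  rw [apply_eq_linearPart_add_antilinearPart _ v, apply_eq_linearPart_add_antilinearPart _ (I * v),
    map_mul, conj_I, dbar]
  linear_combination
    (antilinearPart (fderiv ℝ φ z) * conj v - linearPart (fderiv ℝ φ z) * v) * I_mul_I

end Wirtinger

section CauchyTransform

open MeasureTheory ComplexConjugate

theorem intervalIntegral_fderiv_sub_smul_apply {E F : Type*} [NormedAddCommGroup E]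
    [NormedSpace ℝ E] [NormedAddCommGroup F] [NormedSpace ℝ F] [CompleteSpace F] {g : E → F}
    (hg : ContDiff ℝ 1 g) (z v : E) (R : ℝ) :
    ∫ r in (0 : ℝ)..R, fderiv ℝ g (z - r • v) v = g z - g (z - R • v) := by
  have hderiv (r : ℝ) : HasDerivAt (fun r : ℝ => -g (z - r • v)) (fderiv ℝ g (z - r • v) v) r := by
    have hline : HasDerivAt (fun r : ℝ => z - r • v) (-v) r := by
      simpa using ((hasDerivAt_id r).smul_const v).const_sub z
    have hg' := (hg.differentiable one_ne_zero (z - r • v)).hasFDerivAt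
    refine (hg'.comp_hasDerivAt r hline).neg.congr_deriv ?_
    rw [map_neg, neg_neg]
  have hcont : Continuous fun r : ℝ => fderiv ℝ g (z - r • v) v :=
    ((hg.continuous_fderiv one_ne_zero).comp (by fun_prop)).clm_apply continuous_const
  rw [intervalIntegral.integral_eq_sub_of_hasDerivAt (fun r _ => hderiv r)
    (hcont.intervalIntegrable 0 R)]
  simp only [zero_smul, sub_zero]
  abel

theorem intervalIntegral_fderiv_sub_circleMap_eq_zero {F : Type*} [NormedAddCommGroup F]
    [NormedSpace ℝ F] [CompleteSpace F] {g : ℂ → F} (hg : ContDiff ℝ 1 g) (z : ℂ) {r : ℝ}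
    (hr : r ≠ 0) :
    ∫ θ in (-π)..π, fderiv ℝ g (z - r • circleMap 0 1 θ) (I * circleMap 0 1 θ) = 0 := by
  have hderiv (θ : ℝ) : HasDerivAt (fun θ : ℝ => -r⁻¹ • g (z - r • circleMap 0 1 θ))
      (fderiv ℝ g (z - r • circleMap 0 1 θ) (I * circleMap 0 1 θ)) θ := by
    have hcirc : HasDerivAt (fun θ : ℝ => z - r • circleMap 0 1 θ)
        (-(r • (circleMap 0 1 θ * I))) θ :=
      ((hasDerivAt_circleMap 0 1 θ).const_smul r).const_sub z
    have hg' := (hg.differentiable one_ne_zero (z - r • circleMap 0 1 θ)).hasFDerivAt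
    refine ((hg'.comp_hasDerivAt θ hcirc).const_smul (-r⁻¹)).congr_deriv ?_
    rw [map_neg, map_smul, smul_neg, neg_smul, neg_neg, inv_smul_smul₀ hr, mul_comm]
  have hcont : Continuous fun θ : ℝ =>
      fderiv ℝ g (z - r • circleMap 0 1 θ) (I * circleMap 0 1 θ) :=
    ((hg.continuous_fderiv one_ne_zero).comp (by fun_prop)).clm_apply (by fun_prop)
  rw [intervalIntegral.integral_eq_sub_of_hasDerivAt (fun θ _ => hderiv θ)
    (hcont.intervalIntegrable _ _)]
  have hper : circleMap 0 1 π = circleMap 0 1 (-π) := by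
    rw [← periodic_circleMap 0 1 (-π)]
    congr 1
    ring
  rw [hper, sub_self]

theorem integral_eq_integral_polar {E : Type*} [NormedAddCommGroup E] [NormedSpace ℝ E]
    {f : ℂ → E} {g : ℝ × ℝ → E} {R : ℝ} (hf : ∀ w, R ≤ ‖w‖ → f w = 0)
    (hfg : ∀ r θ : ℝ, 0 < r → r • f (r * circleMap 0 1 θ) = g (r, θ)) :
    ∫ w, f w = ∫ p in Ioc 0 R ×ˢ Ioc (-π) π, g p := by
  have hpolar (p : ℝ × ℝ) : Complex.polarCoord.symm p = p.1 * circleMap 0 1 p.2 := by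
    rw [circleMap_zero, ofReal_one, one_mul, exp_mul_I, Complex.polarCoord_symm_apply, ofReal_cos,
      ofReal_sin]
  have hvanish : ∀ p ∈ (Ioi (0 : ℝ) ×ˢ Ioo (-π) π) \ (Ioo 0 R ×ˢ Ioo (-π) π), g p = 0 := by
    rintro ⟨r, θ⟩ ⟨⟨hr, hθ⟩, hR⟩
    have hr' : (0 : ℝ) < r := hr
    have hrR : R ≤ r := not_lt.1 fun h => hR ⟨⟨hr, h⟩, hθ⟩
    rw [← hfg r θ hr, hf _ (by simpa [abs_of_pos hr'] using hrR), smul_zero]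
  calc ∫ w, f w
      = ∫ p in Ioi (0 : ℝ) ×ˢ Ioo (-π) π, g p := by
        rw [← Complex.integral_comp_polarCoord_symm, polarCoord_target]
        refine setIntegral_congr_fun (measurableSet_Ioi.prod measurableSet_Ioo) fun p hp => ?_
        rw [hpolar, hfg p.1 p.2 hp.1]
    _ = ∫ p in Ioo 0 R ×ˢ Ioo (-π) π, g p :=
        setIntegral_eq_of_subset_of_forall_sdiff_eq_zero (measurableSet_Ioi.prod measurableSet_Ioo)
          (prod_mono_left Ioo_subset_Ioi_self) hvanish
    _ = ∫ p in Ioc 0 R ×ˢ Ioc (-π) π, g p :=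
        setIntegral_congr_set (Measure.set_prod_ae_eq Ioo_ae_eq_Ioc Ioo_ae_eq_Ioc)

theorem continuous_fderiv_sub_smul_circleMap_apply {F : Type*} [NormedAddCommGroup F]
    [NormedSpace ℝ F] {g : ℂ → F} (hg : ContDiff ℝ 1 g) (z : ℂ) {v : ℝ × ℝ → ℂ}
    (hv : Continuous v) :
    Continuous fun p : ℝ × ℝ => fderiv ℝ g (z - p.1 • circleMap 0 1 p.2) (v p) :=
  ((hg.continuous_fderiv one_ne_zero).comp (by fun_prop)).clm_apply hv

theorem integrableOn_Ioc_prod_Ioc {E : Type*} [NormedAddCommGroup E] {h : ℝ × ℝ → E}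
    (hh : Continuous h) (a b c d : ℝ) : IntegrableOn h (Ioc a b ×ˢ Ioc c d) :=
  (hh.continuousOn.integrableOn_compact (isCompact_Icc.prod isCompact_Icc)).mono_set
    (prod_mono Ioc_subset_Icc_self Ioc_subset_Icc_self)

theorem setIntegral_fderiv_circleMap_radial {g : ℂ → ℂ} (hg : ContDiff ℝ 1 g) {z : ℂ} {R : ℝ}
    (hR : 0 ≤ R) (hgR : ∀ θ, g (z - R • circleMap 0 1 θ) = 0) :
    ∫ p in Ioc 0 R ×ˢ Ioc (-π) π,
      fderiv ℝ g (z - p.1 • circleMap 0 1 p.2) (circleMap 0 1 p.2) = 2 * π * g z := by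
  have hcont := continuous_fderiv_sub_smul_circleMap_apply hg z
    (v := fun p => circleMap 0 1 p.2) (by fun_prop)
  have hswap : Continuous fun p : ℝ × ℝ =>
      fderiv ℝ g (z - p.2 • circleMap 0 1 p.1) (circleMap 0 1 p.1) := hcont.comp continuous_swap
  rw [Measure.volume_eq_prod, ← setIntegral_prod_swap]
  simp only [Prod.fst_swap, Prod.snd_swap]
  rw [setIntegral_prod _ (integrableOn_Ioc_prod_Ioc hswap _ _ _ _)]
  have hinner (θ : ℝ) : ∫ r in Ioc 0 R,
      fderiv ℝ g (z - r • circleMap 0 1 θ) (circleMap 0 1 θ) = g z := by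
    rw [← intervalIntegral.integral_of_le hR, intervalIntegral_fderiv_sub_smul_apply hg, hgR,
      sub_zero]
  simp only [hinner, setIntegral_const]
  rw [Real.volume_real_Ioc_of_le (by linarith [pi_pos]), real_smul]
  push_cast
  ring

theorem setIntegral_fderiv_circleMap_angular {g : ℂ → ℂ} (hg : ContDiff ℝ 1 g) (z : ℂ) (R : ℝ) :
    ∫ p in Ioc 0 R ×ˢ Ioc (-π) π,
      fderiv ℝ g (z - p.1 • circleMap 0 1 p.2) (I * circleMap 0 1 p.2) = 0 := by
  have hcont := continuous_fderiv_sub_smul_circleMap_apply hg z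
    (v := fun p => I * circleMap 0 1 p.2) (by fun_prop)
  rw [Measure.volume_eq_prod, setIntegral_prod _ (integrableOn_Ioc_prod_Ioc hcont _ _ _ _)]
  refine setIntegral_eq_zero_of_forall_eq_zero fun r hr => ?_
  rw [← intervalIntegral.integral_of_le (by linarith [pi_pos]),
    intervalIntegral_fderiv_sub_circleMap_eq_zero hg z hr.1.ne']

theorem integral_inv_mul_dbar_sub {g : ℂ → ℂ} (hg : ContDiff ℝ 1 g) (hs : HasCompactSupport g)
    (z : ℂ) : ∫ w, w⁻¹ * dbar g (z - w) = π * g z := by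
  obtain ⟨R, hR0, hR⟩ : ∃ R : ℝ, 0 < R ∧ ∀ w, R ≤ ‖w‖ → z - w ∉ tsupport g := by
    obtain ⟨R, hR⟩ := hs.isCompact.isBounded.subset_ball z
    refine ⟨max R 1, by positivity, fun w hw hw' => ?_⟩
    have hwR : ‖w‖ < R := by simpa [dist_eq_norm] using hR hw'
    exact hwR.not_ge ((le_max_left R 1).trans hw)
  have hdbar_zero (w : ℂ) (hw : R ≤ ‖w‖) : w⁻¹ * dbar g (z - w) = 0 := by
    rw [dbar, fderiv_of_notMem_tsupport ℝ (hR w hw), map_zero, mul_zero]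
  have hg_zero (θ : ℝ) : g (z - R • circleMap 0 1 θ) = 0 :=
    image_eq_zero_of_notMem_tsupport (hR _ (by simp [abs_of_pos hR0]))
  let D : ℝ × ℝ → ℂ →L[ℝ] ℂ := fun p => fderiv ℝ g (z - p.1 • circleMap 0 1 p.2)
  have hpolar (r θ : ℝ) (hr : 0 < r) :
      r • ((r * circleMap 0 1 θ)⁻¹ * dbar g (z - r * circleMap 0 1 θ)) =
        (2⁻¹ : ℂ) * (D (r, θ) (circleMap 0 1 θ) + I * D (r, θ) (I * circleMap 0 1 θ)) := by
    have hr' : (r : ℂ) ≠ 0 := ofReal_ne_zero.2 hr.ne'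
    have hinv : (circleMap 0 1 θ)⁻¹ = conj (circleMap 0 1 θ) := by
      rw [circleMap_zero_inv, inv_one, conj_circleMap_zero]
    rw [real_smul, ← conj_mul_two_mul_dbar, mul_inv, hinv, real_smul]
    field_simp
  have hint (v : ℝ × ℝ → ℂ) (hv : Continuous v) :
      IntegrableOn (fun p => D p (v p)) (Ioc 0 R ×ˢ Ioc (-π) π) :=
    integrableOn_Ioc_prod_Ioc (continuous_fderiv_sub_smul_circleMap_apply hg z hv) _ _ _ _
  rw [integral_eq_integral_polar (g := fun p => 2⁻¹ * (D p (circleMap 0 1 p.2) +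
      I * D p (I * circleMap 0 1 p.2))) hdbar_zero hpolar, integral_const_mul,
    integral_add (hint _ (by fun_prop)) ((hint _ (by fun_prop)).const_mul I), integral_const_mul,
    setIntegral_fderiv_circleMap_radial hg hR0.le hg_zero, setIntegral_fderiv_circleMap_angular hg]
  ring

theorem locallyIntegrable_inv : LocallyIntegrable (fun w : ℂ => w⁻¹) := by
  intro z
  refine ⟨Metric.ball 0 (‖z‖ + 1), Metric.isOpen_ball.mem_nhds (by simp), ?_⟩
  have hnorm : IntegrableOn (fun w : ℂ => ‖w‖⁻¹) (Metric.ball 0 (‖z‖ + 1)) := by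
    rw [integrableOn_fun_norm_addHaar (μ := volume) (f := fun t => t⁻¹),
      Complex.finrank_real_complex]
    refine IntegrableOn.congr_fun (f := fun _ => (1 : ℝ)) (by simp) (fun t ht => ?_)
      measurableSet_Ioo
    simp [ht.1.ne']
  exact hnorm.mono' (by fun_prop) (by simp)

theorem dbar_inv_convolution {g : ℂ → ℂ} (hg : ContDiff ℝ 1 g) (hs : HasCompactSupport g) (z : ℂ) :
    dbar (convolution (fun w => w⁻¹) g (ContinuousLinearMap.mul ℝ ℂ) volume) z = π * g z := by
  let L := ContinuousLinearMap.mul ℝ ℂ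
  have hderiv := hs.hasFDerivAt_convolution_right L locallyIntegrable_inv hg z
  have hint : ConvolutionExistsAt (fun w : ℂ => w⁻¹) (fderiv ℝ g) z (L.precompR ℂ) volume :=
    (hs.fderiv ℝ).convolutionExists_right _ locallyIntegrable_inv
      (hg.continuous_fderiv one_ne_zero) z
  rw [dbar, hderiv.fderiv, convolution, ← antilinearPart.integral_comp_comm hint,
    ← integral_inv_mul_dbar_sub hg hs]
  refine integral_congr_ae (.of_forall fun w => ?_)
  change antilinearPart ((ContinuousLinearMap.mul ℝ ℂ w⁻¹).comp (fderiv ℝ g (z - w))) = _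
  simp only [dbar, antilinearPart_apply, ContinuousLinearMap.comp_apply,
    ContinuousLinearMap.mul_apply']
  ring

theorem exists_contDiff_dbar_eq {g : ℂ → ℂ} (hg : ContDiff ℝ (⊤ : ℕ∞) g)
    (hs : HasCompactSupport g) : ∃ v : ℂ → ℂ, ContDiff ℝ (⊤ : ℕ∞) v ∧ ∀ z, dbar v z = g z := by
  let c : ℂ := (π : ℂ)⁻¹
  have hcg : ContDiff ℝ (⊤ : ℕ∞) fun z => c * g z := contDiff_const.mul hg
  have hcs : HasCompactSupport fun z => c * g z := hs.mul_left
  refine ⟨_, hcs.contDiff_convolution_right (ContinuousLinearMap.mul ℝ ℂ)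
    locallyIntegrable_inv hcg, fun z => ?_⟩
  rw [dbar_inv_convolution (hcg.of_le (mod_cast le_top)) hcs,
    mul_inv_cancel_left₀ (ofReal_ne_zero.2 pi_ne_zero)]

end CauchyTransform

section FourierSeries

open MeasureTheory Filter

theorem periodic_iteratedDeriv {F : Type*} [NormedAddCommGroup F] [NormedSpace ℝ F] {g : ℝ → F}
    {T : ℝ} (hg : Function.Periodic g T) (k : ℕ) : Function.Periodic (iteratedDeriv k g) T := by
  intro x
  rw [← congrFun (iteratedDeriv_comp_add_const k g T) x,
    show (fun y => g (y + T)) = g from funext hg]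

theorem continuous_periodic_lift {T : ℝ} {g : ℝ → ℂ} (hg : Function.Periodic g T)
    (hcont : Continuous g) : Continuous (hg.lift : AddCircle T → ℂ) :=
  hcont.quotient_lift _

variable {T : ℝ} [hT : Fact (0 < T)] {g : ℝ → ℂ}

theorem fourierCoeff_lift_deriv (hg : Function.Periodic g T) (hg' : Function.Periodic (deriv g) T)
    (hdiff : ContDiff ℝ 1 g) (n : ℤ) :
    fourierCoeff hg'.lift n = 2 * π * I * n / T * fourierCoeff hg.lift n := by
  have hfourier (x : ℝ) := hasDerivAt_fourier_neg T n x
  have hcont : Continuous fun x : ℝ => fourier (-n) (x : AddCircle T) :=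
    (fourier (-n)).continuous.comp (AddCircle.continuous_mk' T)
  have hparts := intervalIntegral.integral_mul_deriv_eq_deriv_mul (a := 0) (b := T)
    (fun x _ => hfourier x)
    (fun x _ => (hdiff.differentiable one_ne_zero x).hasDerivAt)
    ((continuous_const.mul hcont).intervalIntegrable _ _)
    ((hdiff.continuous_deriv le_rfl).intervalIntegrable _ _)
  have hends : fourier (-n) (T : AddCircle T) * g T - fourier (-n) ((0 : ℝ) : AddCircle T) * g 0
      = 0 := by
    rw [AddCircle.coe_period, QuotientAddGroup.mk_zero, hg.eq, sub_self]
  rw [hends, zero_sub] at hparts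
  simp only [fourierCoeff_eq_intervalIntegral _ n 0, zero_add, Function.Periodic.lift_coe,
    smul_eq_mul]
  rw [hparts, ← intervalIntegral.integral_neg, mul_smul_comm, ← intervalIntegral.integral_const_mul]
  congr 2 with x
  ring

theorem fourierCoeff_lift_iteratedDeriv (hg : Function.Periodic g T)
    (hsmooth : ContDiff ℝ (⊤ : ℕ∞) g) (k : ℕ) (n : ℤ) :
    fourierCoeff (periodic_iteratedDeriv hg k).lift n =
      (2 * π * I * n / T) ^ k * fourierCoeff hg.lift n := by
  have lift_congr {h₁ h₂ : ℝ → ℂ} (hh₁ : Function.Periodic h₁ T) (hh₂ : Function.Periodic h₂ T)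
      (heq : h₁ = h₂) : (hh₁.lift : AddCircle T → ℂ) = hh₂.lift := by
    subst heq
    rfl
  induction k with
  | zero => rw [lift_congr _ hg iteratedDeriv_zero, pow_zero, one_mul]
  | succ k ih =>
    have hper : Function.Periodic (deriv (iteratedDeriv k g)) T := by
      rw [← iteratedDeriv_succ]
      exact periodic_iteratedDeriv hg (k + 1)
    have hk : ContDiff ℝ 1 (iteratedDeriv k g) := by
      rw [iteratedDeriv_eq_iterate]
      exact ContDiff.iterate_deriv' 1 k (hsmooth.of_le (mod_cast le_top))
    rw [lift_congr _ hper iteratedDeriv_succ,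
      fourierCoeff_lift_deriv (periodic_iteratedDeriv hg k) hper hk, ih]
    ring

theorem exists_norm_fourierCoeff_lift_le (hg : Function.Periodic g T) (hcont : Continuous g) :
    ∃ C, ∀ n, ‖fourierCoeff hg.lift n‖ ≤ C := by
  obtain ⟨C, hC⟩ := isCompact_univ.exists_bound_of_continuousOn
    (continuous_periodic_lift hg hcont).continuousOn
  refine ⟨C, fun n => ?_⟩
  have hle := norm_integral_le_of_norm_le_const (μ := AddCircle.haarAddCircle (T := T))
    (f := fun t => fourier (-n) t • hg.lift t) (C := C)
    (.of_forall fun t => by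
      rw [norm_smul, fourier_apply, Circle.norm_coe, one_mul]
      exact hC t (mem_univ t))
  rwa [probReal_univ, mul_one] at hle

theorem summable_pow_mul_norm_fourierCoeff_lift (hg : Function.Periodic g T)
    (hsmooth : ContDiff ℝ (⊤ : ℕ∞) g) (k : ℕ) :
    Summable fun n : ℤ => |(n : ℝ)| ^ k * ‖fourierCoeff hg.lift n‖ := by
  have hcont (j : ℕ) : Continuous (iteratedDeriv j g) :=
    hsmooth.continuous_iteratedDeriv j (mod_cast le_top)
  obtain ⟨C, hC⟩ := exists_norm_fourierCoeff_lift_le (periodic_iteratedDeriv hg (k + 2))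
    (hcont (k + 2))
  have hT' := hT.out
  let a : ℝ := 2 * π / T
  have : 0 < a := by positivity
  have hdecay (n : ℤ) : (a * |(n : ℝ)|) ^ (k + 2) * ‖fourierCoeff hg.lift n‖ ≤ C := by
    have h := hC n
    rw [fourierCoeff_lift_iteratedDeriv hg hsmooth, norm_mul, norm_pow] at h
    convert h using 3
    simp [a, abs_of_pos pi_pos, abs_of_pos hT']
    ring
  refine Summable.of_norm_bounded_eventually
    ((Real.summable_one_div_int_pow.2 one_lt_two).mul_left (C / a ^ (k + 2))) ?_
  filter_upwards [(finite_singleton (0 : ℤ)).compl_mem_cofinite] with n hn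
  have hn' : 0 < |(n : ℝ)| := abs_pos.2 (Int.cast_ne_zero.2 hn)
  rw [norm_of_nonneg (by positivity), ← sq_abs (n : ℝ), div_mul_div_comm, mul_one,
    le_div_iff₀ (by positivity)]
  refine le_of_eq_of_le ?_ (hdecay n)
  ring

theorem hasSum_fourierCoeff_lift (hg : Function.Periodic g T) (hsmooth : ContDiff ℝ (⊤ : ℕ∞) g)
    (x : ℝ) :
    HasSum (fun n : ℤ => fourierCoeff hg.lift n * fourier n (x : AddCircle T)) (g x) := by
  let F : C(AddCircle T, ℂ) := ⟨hg.lift, continuous_periodic_lift hg hsmooth.continuous⟩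
  have hsummable : Summable (fourierCoeff F) := .of_norm
    ((summable_pow_mul_norm_fourierCoeff_lift hg hsmooth 0).congr fun n => by
      rw [pow_zero, one_mul]
      rfl)
  exact has_pointwise_sum_fourier_series_of_summable hsummable x

end FourierSeries

section AlmostAnalytic

open Filter Topology

theorem exists_norm_le_of_periodic_of_eq_zero {E : Type*} [NormedAddCommGroup E] {h : ℂ → E}
    (hcont : Continuous h) {T R : ℝ} (hT : 0 < T) (hper : Function.Periodic h (T : ℂ))
    (hR : ∀ z, R < |z.im| → h z = 0) : ∃ M, ∀ z, ‖h z‖ ≤ M := by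
  obtain ⟨M, hM⟩ := ((isCompact_Icc (a := 0) (b := T)).reProdIm
    (isCompact_Icc (a := -R) (b := R))).exists_bound_of_continuousOn hcont.continuousOn
  refine ⟨max M 0, fun z => ?_⟩
  rcases lt_or_ge R |z.im| with hz | hz
  · simp [hR z hz]
  · obtain ⟨m, hm, -⟩ := existsUnique_add_zsmul_mem_Ico hT z.re 0
    rw [← hper.int_mul m z]
    refine (hM _ ?_).trans (le_max_left _ _)
    rw [zsmul_eq_mul, zero_add] at hm
    exact ⟨by simpa using ⟨hm.1, hm.2.le⟩, by simpa using abs_le.1 hz⟩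

/-- The function `exp (I * z)`, cut off smoothly in the strip `1 ≤ |im z| ≤ 2` so that it is
bounded with all its derivatives. Its dilates replace the exponentials of a Fourier series to extend
the series from the real line to the plane. -/
noncomputable def cutoffExp (z : ℂ) : ℂ :=
  exp (I * z) * (⟨1, 2, one_pos, one_lt_two⟩ : ContDiffBump (0 : ℝ)) z.im

theorem contDiff_cutoffExp : ContDiff ℝ (⊤ : ℕ∞) cutoffExp :=
  (contDiff_const.mul contDiff_id).cexp.mul
    (ofRealCLM.contDiff.comp ((ContDiffBump.contDiff _).comp imCLM.contDiff))

theorem cutoffExp_of_abs_im_le_one {z : ℂ} (hz : |z.im| ≤ 1) : cutoffExp z = exp (I * z) := by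
  rw [cutoffExp, ContDiffBump.one_of_mem_closedBall _ (by simpa using hz), ofReal_one, mul_one]

theorem cutoffExp_of_two_le_abs_im {z : ℂ} (hz : 2 ≤ |z.im|) : cutoffExp z = 0 := by
  rw [cutoffExp, ContDiffBump.zero_of_le_dist _ (by simpa using hz), ofReal_zero, mul_zero]

theorem periodic_cutoffExp : Function.Periodic cutoffExp (2 * π : ℝ) := by
  intro z
  rw [cutoffExp, cutoffExp, add_im, ofReal_im, add_zero, mul_add,
    show I * ((2 * π : ℝ) : ℂ) = 2 * π * I by push_cast; ring, exp_periodic]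

theorem exists_norm_iteratedFDeriv_cutoffExp_le (k : ℕ) :
    ∃ M, ∀ z, ‖iteratedFDeriv ℝ k cutoffExp z‖ ≤ M := by
  refine exists_norm_le_of_periodic_of_eq_zero (R := 2)
    (contDiff_cutoffExp.continuous_iteratedFDeriv (mod_cast le_top)) two_pi_pos (fun z => ?_)
    fun z hz => ?_
  · rw [← iteratedFDeriv_comp_add_right, show (fun w => cutoffExp (w + (2 * π : ℝ))) = cutoffExp
      from funext periodic_cutoffExp]
  · have hzero : cutoffExp =ᶠ[𝓝 z] fun _ => 0 := by
      filter_upwards [(continuous_im.abs.continuousAt).eventually_const_lt hz] with w hw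
      exact cutoffExp_of_two_le_abs_im hw.le
    rw [(hzero.iteratedFDeriv ℝ k).eq_of_nhds, iteratedFDeriv_fun_zero, Pi.zero_apply]

theorem dbar_smul_comp_smul_cutoffExp_eventuallyEq (c : ℂ) (a x : ℝ) :
    dbar (fun z => c • cutoffExp (a • z)) =ᶠ[𝓝 (x : ℂ)] fun _ => 0 := by
  have hstrip : ∀ᶠ z : ℂ in 𝓝 (x : ℂ), |(a • z).im| < 1 := by
    have hcont : Continuous fun z : ℂ => |(a • z).im| := by fun_prop
    exact hcont.continuousAt.eventually_lt_const (by simp)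
  filter_upwards [hstrip.eventually_nhds] with z hz
  have hexp : (fun w : ℂ => c • cutoffExp (a • w)) =ᶠ[𝓝 z] fun w => c • exp (I * (a • w)) := by
    filter_upwards [hz] with w hw
    rw [cutoffExp_of_abs_im_le_one hw.le]
  have hdiff : DifferentiableAt ℂ (fun w : ℂ => c • exp (I * (a • w))) z := by fun_prop
  exact dbar_eq_zero_of_differentiableAt (hdiff.congr_of_eventuallyEq hexp)

theorem norm_iteratedFDeriv_smul_cutoffExp_le {k : ℕ} {M : ℝ}
    (hM : ∀ z, ‖iteratedFDeriv ℝ k cutoffExp z‖ ≤ M) (c : ℂ) (a : ℝ) (z : ℂ) :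
    ‖iteratedFDeriv ℝ k (fun w => c • cutoffExp (a • w)) z‖ ≤ |a| ^ k * ‖c‖ * M := by
  have hk : ContDiff ℝ k cutoffExp := contDiff_cutoffExp.of_le (mod_cast le_top)
  have hak : ContDiff ℝ k fun w => cutoffExp (a • w) := hk.comp (contDiff_const_smul a)
  rw [iteratedFDeriv_const_smul_apply' hak.contDiffAt,
    iteratedFDeriv_comp_const_smul _ hk, norm_smul, norm_smul, norm_pow, Real.norm_eq_abs,
    ← mul_assoc, mul_comm ‖c‖]
  gcongr
  exact hM _

variable {α : Type*} {q : α → ℂ → ℂ} {v : ℕ → α → ℝ}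

theorem dbar_tsum (hq : ∀ i, ContDiff ℝ (⊤ : ℕ∞) (q i)) (hv : ∀ k, Summable (v k))
    (hqv : ∀ k i z, ‖iteratedFDeriv ℝ k (q i) z‖ ≤ v k i) :
    dbar (fun z => ∑' i, q i z) = fun z => ∑' i, dbar (q i) z := by
  have hfderiv (i : α) (z : ℂ) : ‖fderiv ℝ (q i) z‖ ≤ v 1 i := by
    simpa only [norm_iteratedFDeriv_one] using hqv 1 i z
  have hzero : Summable fun i => q i 0 :=
    .of_norm_bounded (hv 0) fun i => by simpa only [norm_iteratedFDeriv_zero] using hqv 0 i 0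
  funext z
  rw [dbar, fderiv_tsum_apply (hv 1) (fun i => (hq i).differentiable (by simp)) hfderiv hzero,
    antilinearPart.map_tsum (.of_norm_bounded (hv 1) fun i => hfderiv i z)]
  rfl

theorem flatAt_dbar_tsum (hq : ∀ i, ContDiff ℝ (⊤ : ℕ∞) (q i)) (hv : ∀ k, Summable (v k))
    (hqv : ∀ k i z, ‖iteratedFDeriv ℝ k (q i) z‖ ≤ v k i) {z : ℂ}
    (hz : ∀ i, FlatAt (dbar (q i)) z) : FlatAt (dbar fun w => ∑' i, q i w) z := by
  have hdbar (k : ℕ) (i : α) (w : ℂ) :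
      ‖iteratedFDeriv ℝ k (dbar (q i)) w‖ ≤ ‖antilinearPart‖ * v (k + 1) i := by
    have hfderiv : ContDiff ℝ (⊤ : ℕ∞) (fderiv ℝ (q i)) := (hq i).fderiv_right le_rfl
    refine (antilinearPart.norm_iteratedFDeriv_comp_left hfderiv.contDiffAt
      (mod_cast le_top)).trans ?_
    rw [norm_iteratedFDeriv_fderiv]
    gcongr
    exact hqv (k + 1) i w
  intro n
  rw [dbar_tsum hq hv hqv, iteratedFDeriv_tsum_apply (N := ⊤) (fun i => contDiff_dbar (hq i))
    (fun k _ => (hv (k + 1)).mul_left _) (fun k i w _ => hdbar k i w) le_top]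
  simp only [hz _ n, tsum_zero]

theorem exists_almostAnalytic_extension {g : ℝ → ℂ} (hg : ContDiff ℝ (⊤ : ℕ∞) g)
    (hper : Function.Periodic g (2 * π)) :
    ∃ G : ℂ → ℂ, ContDiff ℝ (⊤ : ℕ∞) G ∧ (∀ x : ℝ, G x = g x) ∧ ∀ x : ℝ, FlatAt (dbar G) x := by
  have : Fact (0 < 2 * π) := ⟨two_pi_pos⟩
  choose M hM using exists_norm_iteratedFDeriv_cutoffExp_le
  let c : ℤ → ℂ := fourierCoeff hper.lift
  let q : ℤ → ℂ → ℂ := fun n z => c n • cutoffExp ((n : ℝ) • z)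
  let v : ℕ → ℤ → ℝ := fun k n => |(n : ℝ)| ^ k * ‖c n‖ * M k
  have hq (n : ℤ) : ContDiff ℝ (⊤ : ℕ∞) (q n) :=
    (contDiff_cutoffExp.comp (contDiff_const_smul _)).const_smul (c n)
  have hv (k : ℕ) : Summable (v k) :=
    (summable_pow_mul_norm_fourierCoeff_lift hper hg k).mul_right (M k)
  have hqv (k : ℕ) (n : ℤ) (z : ℂ) : ‖iteratedFDeriv ℝ k (q n) z‖ ≤ v k n :=
    norm_iteratedFDeriv_smul_cutoffExp_le (hM k) (c n) n z
  refine ⟨fun z => ∑' n, q n z, contDiff_tsum (N := ⊤) hq (fun k _ => hv k)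
    (fun k n z _ => hqv k n z), fun x => ?_, fun x => flatAt_dbar_tsum hq hv hqv fun n k => ?_⟩
  · rw [← (hasSum_fourierCoeff_lift hper hg x).tsum_eq]
    refine tsum_congr fun n => ?_
    have hreal : |((n : ℝ) • (x : ℂ)).im| ≤ 1 := by simp
    simp only [q]
    rw [cutoffExp_of_abs_im_le_one hreal, smul_eq_mul, fourier_coe_apply, real_smul]
    congr 2
    push_cast
    field_simp
  · rw [((dbar_smul_comp_smul_cutoffExp_eventuallyEq (c n) n x).iteratedFDeriv ℝ k).eq_of_nhds,
      iteratedFDeriv_fun_zero, Pi.zero_apply]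

end AlmostAnalytic

section JordanCurves

open Filter Topology

/-- A regular smooth simple closed curve in the plane, given by a `2π`-periodic parametrization
defined on the whole line. -/
structure IsSmoothJordanCurve (γ : ℝ → ℂ) : Prop where
  contDiff : ContDiff ℝ (⊤ : ℕ∞) γ
  periodic : Function.Periodic γ (2 * π)
  injOn : InjOn γ (Ico 0 (2 * π))
  deriv_ne_zero : ∀ θ, deriv γ θ ≠ 0

variable {γ : ℝ → ℂ}

theorem IsSmoothJordanCurve.isCompact_range (hγ : IsSmoothJordanCurve γ) : IsCompact (range γ) :=
  hγ.periodic.compact_of_continuous two_pi_pos.ne' hγ.contDiff.continuous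

theorem IsSmoothJordanCurve.exists_int_of_eq (hγ : IsSmoothJordanCurve γ) {s t : ℝ}
    (h : γ s = γ t) : ∃ n : ℤ, s = t + n * (2 * π) := by
  obtain ⟨m, hm, -⟩ := existsUnique_add_zsmul_mem_Ico two_pi_pos s 0
  obtain ⟨n, hn, -⟩ := existsUnique_add_zsmul_mem_Ico two_pi_pos t 0
  simp only [zsmul_eq_mul, zero_add] at hm hn
  have hst := hγ.injOn hm hn (by rw [hγ.periodic.int_mul m s, hγ.periodic.int_mul n t, h])
  exact ⟨n - m, by push_cast; linarith⟩

theorem IsSmoothJordanCurve.image_ball_mem_nhdsWithin (hγ : IsSmoothJordanCurve γ) (θ₀ : ℝ)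
    {ρ : ℝ} (hρ : 0 < ρ) : γ '' Metric.ball θ₀ ρ ∈ 𝓝[range γ] γ θ₀ := by
  let K : Set ℂ := γ '' Icc (θ₀ + ρ) (θ₀ - ρ + 2 * π)
  have hK : IsClosed K := (isCompact_Icc.image hγ.contDiff.continuous).isClosed
  have hθ₀ : γ θ₀ ∉ K := by
    rintro ⟨t, ht, h⟩
    obtain ⟨n, rfl⟩ := hγ.exists_int_of_eq h
    have hpos : 0 < (n : ℝ) := by nlinarith [ht.1, two_pi_pos]
    have hlt : (n : ℝ) < 1 := by nlinarith [ht.2, two_pi_pos]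
    norm_cast at hpos hlt
    lia
  filter_upwards [mem_nhdsWithin_of_mem_nhds (hK.isOpen_compl.mem_nhds hθ₀), self_mem_nhdsWithin]
  rintro _ hz ⟨θ, rfl⟩
  obtain ⟨x, hx, hγx⟩ := hγ.periodic.exists_mem_Ioc two_pi_pos θ (θ₀ - ρ)
  have hlt : x < θ₀ + ρ := not_le.1 fun hle => hz ⟨x, ⟨hle, hx.2⟩, hγx.symm⟩
  exact ⟨x, by rw [Real.ball_eq_Ioo]; exact ⟨hx.1, hlt⟩, hγx.symm⟩

/-- `e` straightens the curve `γ` near one of its points: it is a diffeomorphism of an open subset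
of the parameter plane onto an open subset `e.target` of the plane, it carries the real points of
its source onto the points of `γ` in its target, and it is almost analytic along the real line. The
function `e` is required to be smooth on the whole plane although it is injective only on
`e.source`. -/
structure IsStraightening (γ : ℝ → ℂ) (e : OpenPartialHomeomorph ℂ ℂ) : Prop where
  contDiff : ContDiff ℝ (⊤ : ℕ∞) e
  contDiffOn_symm : ContDiffOn ℝ (⊤ : ℕ∞) e.symm e.target
  apply_ofReal : ∀ x : ℝ, e x = γ x
  exists_ofReal_mem_source : ∀ θ, γ θ ∈ e.target → ∃ x : ℝ, (x : ℂ) ∈ e.source ∧ γ x = γ θ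
  flatAt_dbar : ∀ x : ℝ, FlatAt (dbar e) x
  del_ne_zero : ∀ w ∈ e.source, del e w ≠ 0

theorem IsStraightening.symm_apply_mem_range_ofReal {e : OpenPartialHomeomorph ℂ ℂ}
    (he : IsStraightening γ e) {z : ℂ} (hz : z ∈ e.target) (hzγ : z ∈ range γ) :
    ∃ x : ℝ, e.symm z = x ∧ γ x = z := by
  obtain ⟨θ, rfl⟩ := hzγ
  obtain ⟨x, hx, hxθ⟩ := he.exists_ofReal_mem_source θ hz
  exact ⟨x, by rw [← hxθ, ← he.apply_ofReal, e.left_inv hx], hxθ⟩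

theorem exists_openPartialHomeomorph_of_isInvertible_fderiv {E : Type*} [NormedAddCommGroup E]
    [NormedSpace ℝ E] [CompleteSpace E] {Γ : E → E} (hΓ : ContDiff ℝ (⊤ : ℕ∞) Γ) {p : E}
    (hp : (fderiv ℝ Γ p).IsInvertible) :
    ∃ e : OpenPartialHomeomorph E E, ⇑e = Γ ∧ p ∈ e.source ∧
      ContDiffOn ℝ (⊤ : ℕ∞) e.symm e.target := by
  have hΓ' : Differentiable ℝ Γ := hΓ.differentiable (by simp)
  obtain ⟨L, hL⟩ := hp
  have hLp : HasFDerivAt Γ (L : E →L[ℝ] E) p := hL ▸ (hΓ' p).hasFDerivAt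
  let e₀ := hΓ.contDiffAt.toOpenPartialHomeomorph Γ hLp (by simp)
  have hV : IsOpen {w | (fderiv ℝ Γ w).IsInvertible} :=
    (ContinuousLinearEquiv.isOpen (𝕜 := ℝ)).preimage (hΓ.continuous_fderiv (by simp))
  let e := e₀.restrOpen _ hV
  refine ⟨e, rfl, ⟨hΓ.contDiffAt.mem_toOpenPartialHomeomorph_source hLp (by simp), L, hL⟩,
    fun z hz => ?_⟩
  obtain ⟨M, hM⟩ := (e.map_target hz).2
  exact (e.contDiffAt_symm hz (f₀' := M) (hM ▸ (hΓ' _).hasFDerivAt)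
    hΓ.contDiffAt).contDiffWithinAt

theorem isInvertible_fderiv_of_dbar_eq_zero {Γ : ℂ → ℂ} {w : ℂ} (hdbar : dbar Γ w = 0)
    (hdel : del Γ w ≠ 0) : (fderiv ℝ Γ w).IsInvertible := by
  refine ⟨(ContinuousLinearEquiv.unitsEquivAut ℂ (Units.mk0 _ hdel)).restrictScalars ℝ, ?_⟩
  ext v
  rw [apply_eq_linearPart_add_antilinearPart (fderiv ℝ Γ w), ← dbar, hdbar, ← del]
  simp [mul_comm]

theorem del_ofReal_of_dbar_eq_zero {Γ : ℂ → ℂ} {x : ℝ} (hΓ : DifferentiableAt ℝ Γ x)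
    (hγ : ∀ t : ℝ, Γ t = γ t) (hdbar : dbar Γ x = 0) : del Γ x = deriv γ x := by
  have h : HasDerivAt (fun t : ℝ => Γ t) (fderiv ℝ Γ x 1) x :=
    hΓ.hasFDerivAt.comp_hasDerivAt x ofRealCLM.hasDerivAt
  rw [← funext hγ, h.deriv, apply_eq_linearPart_add_antilinearPart, ← dbar, hdbar, zero_mul,
    add_zero, mul_one, del]

theorem IsSmoothJordanCurve.exists_isStraightening (hγ : IsSmoothJordanCurve γ) (θ₀ : ℝ) :
    ∃ e, IsStraightening γ e ∧ γ θ₀ ∈ e.target := by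
  obtain ⟨Γ, hΓ, hΓγ, hflat⟩ := exists_almostAnalytic_extension hγ.contDiff hγ.periodic
  have hdbar (x : ℝ) : dbar Γ x = 0 := (hflat x).eq_zero
  have hdel : del Γ θ₀ ≠ 0 := by
    rw [del_ofReal_of_dbar_eq_zero (hΓ.differentiable (by simp) _) hΓγ (hdbar θ₀)]
    exact hγ.deriv_ne_zero θ₀
  obtain ⟨e, rfl, hθ₀, hsymm⟩ := exists_openPartialHomeomorph_of_isInvertible_fderiv hΓ
    (isInvertible_fderiv_of_dbar_eq_zero (hdbar θ₀) hdel)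
  have hV : IsOpen {w | del e w ≠ 0} :=
    isOpen_ne_fun (contDiff_del hΓ).continuous continuous_const
  obtain ⟨ρ, hρ, hball⟩ := Metric.isOpen_iff.1 (e.open_source.inter hV) θ₀ ⟨hθ₀, hdel⟩
  obtain ⟨U, hU, hθ₀U, hUγ⟩ := mem_nhdsWithin.1 (hγ.image_ball_mem_nhdsWithin θ₀ hρ)
  let s : Set ℂ := Metric.ball (θ₀ : ℂ) ρ ∩ e ⁻¹' U
  let e' := e.restrOpen s (Metric.isOpen_ball.inter (hU.preimage hΓ.continuous))
  have hs : s ⊆ e'.source := fun w hw => ⟨(hball hw.1).1, hw⟩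
  have hθ₀s : (θ₀ : ℂ) ∈ s := ⟨Metric.mem_ball_self hρ, by rwa [mem_preimage, hΓγ]⟩
  refine ⟨e', ⟨hΓ, hsymm.mono fun z hz => hz.1, hΓγ, fun θ hθ => ?_, hflat,
    fun w hw => (hball hw.2.1).2⟩, hΓγ θ₀ ▸ e'.map_source (hs hθ₀s)⟩
  have hθU : γ θ ∈ U := e'.right_inv hθ ▸ (e'.map_target hθ).2.2
  obtain ⟨x, hx, hxθ⟩ := hUγ ⟨hθU, mem_range_self θ⟩
  refine ⟨x, hs ⟨?_, by rwa [mem_preimage, hΓγ, hxθ]⟩, hxθ⟩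
  rwa [Metric.mem_ball, Complex.dist_eq, ← ofReal_sub, norm_real, ← dist_eq_norm]

end JordanCurves

section LocalExtension

open Filter Topology ComplexConjugate

variable {γ : ℝ → ℂ}

theorem exists_contDiff_eventuallyEq {E F : Type*} [NormedAddCommGroup E] [NormedSpace ℝ E]
    [HasContDiffBump E] [NormedAddCommGroup F] [NormedSpace ℝ F] {ψ : E → F} {U : Set E} {p : E}
    (hψ : ContDiffOn ℝ (⊤ : ℕ∞) ψ U) (hU : IsOpen U) (hp : p ∈ U) :
    ∃ φ : E → F, ContDiff ℝ (⊤ : ℕ∞) φ ∧ φ =ᶠ[𝓝 p] ψ := by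
  obtain ⟨r, hr, hrU⟩ := Metric.isOpen_iff.1 hU p hp
  let χ : ContDiffBump p := ⟨r / 4, r / 2, by positivity, by linarith⟩
  refine ⟨fun z => χ z • ψ z, contMDiff_iff_contDiff.1
    (contMDiff_of_tsupport fun z hz => contMDiffAt_iff_contDiffAt.2 ?_), ?_⟩
  · have hzU : z ∈ U := by
      have hz' := tsupport_smul_subset_left _ _ hz
      rw [χ.tsupport_eq] at hz'
      exact hrU (Metric.closedBall_subset_ball (half_lt_self hr) hz')
    exact χ.contDiffAt.smul (hψ.contDiffAt (hU.mem_nhds hzU))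
  · filter_upwards [χ.eventuallyEq_one] with z hz
    simp [hz]

theorem IsStraightening.dbar_comp_symm {e : OpenPartialHomeomorph ℂ ℂ} (he : IsStraightening γ e)
    {G : ℂ → ℂ} (hG : ContDiff ℝ (⊤ : ℕ∞) G) {z : ℂ} (hz : z ∈ e.target) :
    dbar (G ∘ e.symm) z = (dbar G (e.symm z) - del (G ∘ e.symm) z * dbar e (e.symm z)) *
      (conj (del e (e.symm z)))⁻¹ := by
  have hw := e.map_target hz
  have hψ : ContDiffAt ℝ (⊤ : ℕ∞) (G ∘ e.symm) (e (e.symm z)) := by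
    rw [e.right_inv hz]
    exact hG.contDiffAt.comp z (he.contDiffOn_symm.contDiffAt (e.open_target.mem_nhds hz))
  have hchain := dbar_comp (hψ.differentiableAt (by simp)) (he.contDiff.differentiable (by simp) _)
  have hGe : (G ∘ e.symm) ∘ e =ᶠ[𝓝 (e.symm z)] G := by
    filter_upwards [e.open_source.mem_nhds hw] with w hw
    simp [e.left_inv hw]
  rw [dbar, hGe.fderiv_eq, ← dbar, e.right_inv hz] at hchain
  rw [hchain, add_sub_cancel_left, mul_inv_cancel_right₀]
  exact (map_ne_zero _).2 (he.del_ne_zero _ hw)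

theorem IsStraightening.flatAt_dbar_comp_symm {e : OpenPartialHomeomorph ℂ ℂ}
    (he : IsStraightening γ e) {G : ℂ → ℂ} (hG : ContDiff ℝ (⊤ : ℕ∞) G)
    (hGflat : ∀ x : ℝ, FlatAt (dbar G) x) {z : ℂ} (hz : z ∈ e.target) (hzγ : z ∈ range γ) :
    FlatAt (dbar (G ∘ e.symm)) z := by
  obtain ⟨x, hx, -⟩ := he.symm_apply_mem_range_ofReal hz hzγ
  have hsymm : ContDiffAt ℝ (⊤ : ℕ∞) e.symm z :=
    he.contDiffOn_symm.contDiffAt (e.open_target.mem_nhds hz)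
  have smooth {q : ℂ → ℂ} (hq : ContDiff ℝ (⊤ : ℕ∞) q) : ContDiffAt ℝ (⊤ : ℕ∞) (q ∘ e.symm) z :=
    hq.contDiffAt.comp z hsymm
  have flat {q : ℂ → ℂ} (hq : ContDiff ℝ (⊤ : ℕ∞) q) (hqx : FlatAt q x) : FlatAt (q ∘ e.symm) z :=
    FlatAt.comp (hx ▸ hqx) hq.contDiffAt hsymm
  have hdelG := contDiffAt_del (smooth hG)
  have hdbarG := contDiff_dbar hG
  have hdbare := contDiff_dbar he.contDiff
  have hinv : ContDiffAt ℝ (⊤ : ℕ∞) (fun w => (conj (del e (e.symm w)))⁻¹) z :=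
    (conjCLE.contDiff.contDiffAt.comp z (smooth (contDiff_del he.contDiff))).inv
      ((map_ne_zero (starRingEnd ℂ)).2 (he.del_ne_zero _ (e.map_target hz)))
  have hmul : FlatAt (fun w => dbar e (e.symm w) * del (G ∘ e.symm) w) z :=
    (flat hdbare (he.flatAt_dbar x)).mul (smooth hdbare) hdelG
  refine (((flat hdbarG (hGflat x)).sub hmul (smooth hdbarG) ((smooth hdbare).mul hdelG)).mul
    ((smooth hdbarG).sub ((smooth hdbare).mul hdelG)) hinv).congr ?_
  filter_upwards [e.open_target.mem_nhds hz] with w hw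
  rw [he.dbar_comp_symm hG hw, mul_comm (del _ _)]
  rfl

theorem IsSmoothJordanCurve.exists_local_extension (hγ : IsSmoothJordanCurve γ) {f : ℂ → ℂ}
    (hf : ContDiff ℝ (⊤ : ℕ∞) fun θ => f (γ θ)) (p : ℂ) :
    ∃ φ : ℂ → ℂ, ContDiff ℝ (⊤ : ℕ∞) φ ∧
      ∀ᶠ z in 𝓝 p, z ∈ range γ → φ z = f z ∧ FlatAt (dbar φ) z := by
  by_cases hp : p ∈ range γ
  swap
  · refine ⟨0, contDiff_const, ?_⟩
    filter_upwards [hγ.isCompact_range.isClosed.isOpen_compl.mem_nhds hp] with z hz hzγ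
    exact absurd hzγ hz
  obtain ⟨θ₀, rfl⟩ := hp
  obtain ⟨e, he, hp⟩ := hγ.exists_isStraightening θ₀
  obtain ⟨G, hG, hGf, hGflat⟩ := exists_almostAnalytic_extension hf fun θ => by
    rw [hγ.periodic θ]
  obtain ⟨φ, hφ, hφG⟩ :=
    exists_contDiff_eventuallyEq (hG.comp_contDiffOn he.contDiffOn_symm) e.open_target hp
  refine ⟨φ, hφ, ?_⟩
  filter_upwards [hφG.eventually_nhds, e.open_target.mem_nhds hp] with z hφz hz hzγ
  obtain ⟨x, hx, hxz⟩ := he.symm_apply_mem_range_ofReal hz hzγ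
  refine ⟨by rw [hφz.self_of_nhds, Function.comp_apply, hx, hGf, hxz], ?_⟩
  refine (he.flatAt_dbar_comp_symm hG hGflat hz hzγ).congr ?_
  filter_upwards [hφz.eventually_nhds] with w hw
  rw [dbar, dbar, EventuallyEq.fderiv_eq hw]

end LocalExtension

section Primitives

open Filter Topology AffineMap

variable {E F : Type*} [NormedAddCommGroup E] [NormedSpace ℝ E] [NormedAddCommGroup F]
  [NormedSpace ℝ F] {ω : E → E →L[ℝ] F} {C T : Set E} {a b c : E}

theorem curveIntegral_segment_add_of_triangle
    (hT : ∀ s ∈ Ioo (0 : ℝ) 1, ∀ t ∈ Ioo (0 : ℝ) 1, lineMap a (lineMap b c s) t ∈ T)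
    (hω : ContinuousOn ω (closure T)) (hd : ∀ x ∈ T, DifferentiableAt ℝ ω x)
    (hsymm : ∀ x ∈ T, ∀ u v, fderiv ℝ ω x u v = fderiv ℝ ω x v u) :
    (∫ᶜ x in .segment a b, ω x) + ∫ᶜ x in .segment b c, ω x = ∫ᶜ x in .segment a c, ω x := by
  let φ := ContinuousMap.Homotopy.affine (Path.segment a b : C(unitInterval, E))
    (Path.segment a c)
  have hφT : ∀ p ∈ Ioo (0 : unitInterval) 1, ∀ q ∈ Ioo (0 : unitInterval) 1, φ (p, q) ∈ T := by
    intro p hp q hq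
    convert hT p hp q hq using 1
    simp [φ, lineMap_apply]
    module
  have hφ : EqOn (fun x : ℝ × ℝ => IccExtend zero_le_one (φ.extend x.1) x.2)
      (fun x => lineMap (lineMap a b x.2) (lineMap a c x.2) x.1) (Icc 0 1) := by
    rw [Icc_prod_eq]
    rintro ⟨x, y⟩ ⟨hx, hy⟩
    lift x to unitInterval using hx
    lift y to unitInterval using hy
    simp [φ]
  have key := φ.curveIntegral_add_curveIntegral_eq_of_hasFDerivWithinAt hφT
    (fun x hx => (hd x hx).hasFDerivAt.hasFDerivWithinAt) hω
    (fun x hx u _ v _ => hsymm x hx u v) (.congr (by fun_prop) hφ)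
  convert key using 2
  · dsimp [φ]
    rw [← Path.cast_segment (Path.segment a b).target (Path.segment a c).target, curveIntegral_cast]
  · dsimp [φ]
    rw [← Path.cast_segment (Path.segment a b).source (Path.segment a c).source, curveIntegral_cast,
      Path.segment_same, curveIntegral_refl, add_zero]

theorem curveIntegral_segment_add_of_mem_interior (hC : Convex ℝ C) (hω : ContinuousOn ω C)
    (hd : DifferentiableOn ℝ ω (interior C))
    (hsymm : ∀ x ∈ interior C, ∀ u v, fderiv ℝ ω x u v = fderiv ℝ ω x v u)
    (ha : a ∈ interior C) (hb : b ∈ C) (hc : c ∈ C) :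
    (∫ᶜ x in .segment a b, ω x) + ∫ᶜ x in .segment b c, ω x = ∫ᶜ x in .segment a c, ω x := by
  let τ : ℝ × ℝ → E := fun p => lineMap a (lineMap b c p.1) p.2
  have hτ : τ '' Ioo 0 1 ×ˢ Ioo 0 1 ⊆ interior C := by
    rintro _ ⟨⟨s, t⟩, ⟨hs, ht⟩, rfl⟩
    exact hC.openSegment_interior_self_subset_interior ha
      (hC.lineMap_mem hb hc (Ioo_subset_Icc_self hs)) (lineMap_mem_openSegment _ _ _ ht)
  have hτC : closure (τ '' Ioo 0 1 ×ˢ Ioo 0 1) ⊆ C := by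
    have hτ' : Continuous τ := by fun_prop
    refine (closure_minimal (image_mono (Set.prod_mono Ioo_subset_Icc_self Ioo_subset_Icc_self))
      ((isCompact_Icc.prod isCompact_Icc).image hτ').isClosed).trans ?_
    rintro _ ⟨⟨s, t⟩, ⟨hs, ht⟩, rfl⟩
    exact hC.lineMap_mem (interior_subset ha) (hC.lineMap_mem hb hc hs) ht
  have hT (s : ℝ) (hs : s ∈ Ioo (0 : ℝ) 1) (t : ℝ) (ht : t ∈ Ioo (0 : ℝ) 1) :
      lineMap a (lineMap b c s) t ∈ τ '' Ioo 0 1 ×ˢ Ioo 0 1 := ⟨(s, t), ⟨hs, ht⟩, rfl⟩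
  exact curveIntegral_segment_add_of_triangle hT
    (hω.mono hτC) (fun x hx => hd.differentiableAt (isOpen_interior.mem_nhds (hτ hx)))
    fun x hx => hsymm x (hτ hx)

theorem exists_hasFDerivWithinAt_of_symmetric_on_interior [CompleteSpace F] (hC : Convex ℝ C)
    (hω : ContinuousOn ω C) (hd : DifferentiableOn ℝ ω (interior C))
    (hsymm : ∀ x ∈ interior C, ∀ u v, fderiv ℝ ω x u v = fderiv ℝ ω x v u)
    (hne : (interior C).Nonempty) : ∃ K : E → F, ∀ b ∈ C, HasFDerivWithinAt K (ω b) C b := by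
  obtain ⟨a, ha⟩ := hne
  refine ⟨fun b => ∫ᶜ x in .segment a b, ω x, fun b hb => ?_⟩
  have h := (HasFDerivWithinAt.curveIntegral_segment_source hC hω hb).const_add
    (∫ᶜ x in .segment a b, ω x)
  exact h.congr' (fun c hc =>
    (curveIntegral_segment_add_of_mem_interior hC hω hd hsymm ha hb hc).symm) hb

theorem exists_hasFDerivWithinAt_union {C₁ C₂ : Set E} (h₁ : closure C₁ ∩ C₂ ⊆ C₁)
    (h₂ : closure C₂ ∩ C₁ ⊆ C₂) (hconv : Convex ℝ (C₁ ∩ C₂)) {K₁ K₂ : E → F}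
    (hK₁ : ∀ x ∈ C₁, HasFDerivWithinAt K₁ (ω x) C₁ x)
    (hK₂ : ∀ x ∈ C₂, HasFDerivWithinAt K₂ (ω x) C₂ x) :
    ∃ K : E → F, ∀ x ∈ C₁ ∪ C₂, HasFDerivWithinAt K (ω x) (C₁ ∪ C₂) x := by
  classical
  obtain ⟨k, hk⟩ : ∃ k, ∀ x ∈ C₁ ∩ C₂, K₁ x = K₂ x + k := by
    rcases (C₁ ∩ C₂).eq_empty_or_nonempty with hempty | ⟨y, hy⟩
    · exact ⟨0, by simp [hempty]⟩
    · refine ⟨K₁ y - K₂ y, fun x hx => ?_⟩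
      have hzero (z : E) (hz : z ∈ C₁ ∩ C₂) :
          HasFDerivWithinAt (fun w => K₁ w - K₂ w) (0 : E →L[ℝ] F) (C₁ ∩ C₂) z := by
        simpa using ((hK₁ z hz.1).mono inter_subset_left).fun_sub
          ((hK₂ z hz.2).mono inter_subset_right)
      have hle := hconv.norm_image_sub_le_of_norm_hasFDerivWithin_le hzero
        (fun _ _ => norm_zero.le) hy hx
      rw [zero_mul, norm_le_zero_iff] at hle
      rw [← sub_eq_zero.1 hle, add_sub_cancel]
  let K := C₁.piecewise K₁ fun x => K₂ x + k
  have hC₁ : EqOn K K₁ C₁ := piecewise_eqOn C₁ _ _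
  have hC₂ : EqOn K (fun x => K₂ x + k) C₂ := fun x hx => by
    by_cases hx₁ : x ∈ C₁
    · rw [hC₁ hx₁, hk x ⟨hx₁, hx⟩]
    · exact piecewise_eq_of_notMem C₁ _ _ hx₁
  refine ⟨K, fun x hx => .union ?_ ?_⟩
  · by_cases hx₁ : x ∈ C₁
    · exact (hK₁ x hx₁).congr hC₁ (hC₁ hx₁)
    · exact .of_notMem_closure fun h => hx₁ (h₁ ⟨h, hx.resolve_left hx₁⟩)
  · by_cases hx₂ : x ∈ C₂
    · exact ((hK₂ x hx₂).add_const k).congr hC₂ (hC₂ hx₂)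
    · exact .of_notMem_closure fun h => hx₂ (h₂ ⟨h, hx.resolve_right hx₂⟩)

theorem exists_hasFDerivAt_of_symmetric_off_real [CompleteSpace F] {ω : ℂ → ℂ →L[ℝ] F} {Q : Set ℂ}
    (hQ : IsOpen Q) (hQconv : Convex ℝ Q) {x : ℝ} (hx : (x : ℂ) ∈ Q) (hω : ContinuousOn ω Q)
    (hd : ∀ w ∈ Q, w.im ≠ 0 → DifferentiableAt ℝ ω w)
    (hsymm : ∀ w ∈ Q, w.im ≠ 0 → ∀ u v, fderiv ℝ ω w u v = fderiv ℝ ω w v u) :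
    ∃ K : ℂ → F, ∀ w ∈ Q, HasFDerivAt K (ω w) w := by
  have half {H : Set ℂ} (hH : Convex ℝ H) (hxH : (x : ℂ) ∈ closure (interior H))
      (him : interior H ⊆ {w | w.im ≠ 0}) :
      ∃ K : ℂ → F, ∀ w ∈ Q ∩ H, HasFDerivWithinAt K (ω w) (Q ∩ H) w := by
    have hint : interior (Q ∩ H) = Q ∩ interior H := by rw [interior_inter, hQ.interior_eq]
    refine exists_hasFDerivWithinAt_of_symmetric_on_interior (hQconv.inter hH)
      (hω.mono inter_subset_left) (fun w hw => ?_) (fun w hw => ?_)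
      (hint ▸ mem_closure_iff.1 hxH Q hQ hx) <;> rw [hint] at hw
    · exact (hd w hw.1 (him hw.2)).differentiableWithinAt
    · exact hsymm w hw.1 (him hw.2)
  obtain ⟨K₁, hK₁⟩ := half (convex_halfSpace_im_ge 0) (by simp) (by simp +contextual [ne_of_gt])
  obtain ⟨K₂, hK₂⟩ := half (convex_halfSpace_im_le 0) (by simp) (by simp +contextual [ne_of_lt])
  have hcl₁ : closure (Q ∩ {w : ℂ | 0 ≤ w.im}) ⊆ {w | 0 ≤ w.im} :=
    closure_minimal inter_subset_right (isClosed_le continuous_const continuous_im)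
  have hcl₂ : closure (Q ∩ {w : ℂ | w.im ≤ 0}) ⊆ {w | w.im ≤ 0} :=
    closure_minimal inter_subset_right (isClosed_le continuous_im continuous_const)
  obtain ⟨K, hK⟩ := exists_hasFDerivWithinAt_union (C₁ := Q ∩ {w | 0 ≤ w.im})
    (C₂ := Q ∩ {w | w.im ≤ 0}) (fun w hw => ⟨hw.2.1, hcl₁ hw.1⟩)
    (fun w hw => ⟨hw.2.1, hcl₂ hw.1⟩)
    ((hQconv.inter (convex_halfSpace_im_ge 0)).inter (hQconv.inter (convex_halfSpace_im_le 0)))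
    hK₁ hK₂
  have hunion : Q ∩ {w : ℂ | 0 ≤ w.im} ∪ Q ∩ {w | w.im ≤ 0} = Q := by
    rw [← inter_union_distrib_left, inter_eq_left]
    exact fun w _ => le_total 0 w.im
  rw [hunion] at hK
  exact ⟨K, fun w hw => (hK w hw).hasFDerivAt (hQ.mem_nhds hw)⟩

end Primitives

section Removability

open Filter Topology

variable {H e K : ℂ → ℂ} {w : ℂ}

theorem hasFDerivAt_smul_fderiv (hH : DifferentiableAt ℂ H (e w)) (he : ContDiffAt ℝ 2 e w) :
    HasFDerivAt (fun x => H (e x) • fderiv ℝ e x)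
      (H (e w) • fderiv ℝ (fderiv ℝ e) w + (deriv H (e w) • fderiv ℝ e w).smulRight (fderiv ℝ e w))
      w := by
  have hHe : HasFDerivAt (fun x => H (e x)) (deriv H (e w) • fderiv ℝ e w) w :=
    hH.hasDerivAt.comp_hasFDerivAt w (he.differentiableAt (by simp)).hasFDerivAt
  exact hHe.smul ((he.fderiv_right (m := 1) (by norm_num)).differentiableAt (by simp)).hasFDerivAt

theorem fderiv_smul_fderiv_comm (hH : DifferentiableAt ℂ H (e w)) (he : ContDiffAt ℝ 2 e w)
    (u v : ℂ) : fderiv ℝ (fun x => H (e x) • fderiv ℝ e x) w u v =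
      fderiv ℝ (fun x => H (e x) • fderiv ℝ e x) w v u := by
  have hsymm := (he.isSymmSndFDerivAt (by simp)).eq u v
  simp only [(hasFDerivAt_smul_fderiv hH he).fderiv, add_apply, smul_apply,
    ContinuousLinearMap.smulRight_apply, smul_eq_mul]
  rw [hsymm]
  ring

theorem hasDerivAt_comp_symm {e : OpenPartialHomeomorph ℂ ℂ} {z : ℂ} (hz : z ∈ e.target)
    (he : DifferentiableAt ℝ e (e.symm z)) (hsymm : DifferentiableAt ℝ e.symm z)
    (hK : HasFDerivAt K (H z • fderiv ℝ e (e.symm z)) (e.symm z)) :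
    HasDerivAt (K ∘ e.symm) (H z) z := by
  have hid : (fderiv ℝ e (e.symm z)).comp (fderiv ℝ e.symm z) = .id ℝ ℂ := by
    rw [← fderiv_comp z he hsymm, ← fderiv_id]
    exact EventuallyEq.fderiv_eq
      (eventually_of_mem (e.open_target.mem_nhds hz) fun y hy => e.right_inv hy)
  have hL := hK.comp z hsymm.hasFDerivAt
  rw [ContinuousLinearMap.smul_comp, hid] at hL
  exact hasDerivAt_iff_hasFDerivAt.2 (hasFDerivAt_of_restrictScalars ℝ hL (by ext; simp [mul_comm]))

theorem IsStraightening.differentiableAt_of_diff_range {γ : ℝ → ℂ} {e : OpenPartialHomeomorph ℂ ℂ}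
    (he : IsStraightening γ e) {θ : ℝ} (hθ : γ θ ∈ e.target) {W : Set ℂ} (hW : IsOpen W)
    (hθW : γ θ ∈ W) (hH : ContinuousOn H W) (hd : DifferentiableOn ℂ H (W \ range γ))
    (hγ : IsClosed (range γ)) : DifferentiableAt ℂ H (γ θ) := by
  obtain ⟨x, hx, hγx⟩ := he.exists_ofReal_mem_source θ hθ
  rw [← hγx, ← he.apply_ofReal] at hθW ⊢
  obtain ⟨ρ, hρ, hball⟩ := Metric.isOpen_iff.1
    (e.open_source.inter (hW.preimage he.contDiff.continuous)) x ⟨hx, hθW⟩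
  set Q := Metric.ball (x : ℂ) ρ
  have heC (w : ℂ) : ContDiffAt ℝ 2 e w := (contDiff_infty.1 he.contDiff 2).contDiffAt
  have hHe (w) (hw : w ∈ Q) (him : w.im ≠ 0) : DifferentiableAt ℂ H (e w) := by
    refine hd.differentiableAt ((hW.sdiff hγ).mem_nhds ⟨(hball hw).2, fun hwγ => him ?_⟩)
    obtain ⟨y, hy, -⟩ := he.symm_apply_mem_range_ofReal (e.map_source (hball hw).1) hwγ
    rw [← e.left_inv (hball hw).1, hy, ofReal_im]
  have hω : ContinuousOn (fun w => H (e w) • fderiv ℝ e w) Q :=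
    (hH.comp he.contDiff.continuous.continuousOn fun w hw => (hball hw).2).smul
      (he.contDiff.continuous_fderiv (by simp)).continuousOn
  obtain ⟨K, hK⟩ := exists_hasFDerivAt_of_symmetric_off_real Metric.isOpen_ball
    (convex_ball _ _) (Metric.mem_ball_self hρ) hω
    (fun w hw him => (hasFDerivAt_smul_fderiv (hHe w hw him) (heC w)).differentiableAt)
    fun w hw him => fderiv_smul_fderiv_comm (hHe w hw him) (heC w)
  have hL : ∀ z ∈ e '' Q, HasDerivAt (K ∘ e.symm) (H z) z := by
    rintro _ ⟨w, hw, rfl⟩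
    have hw' := e.map_source (hball hw).1
    refine hasDerivAt_comp_symm hw' ((heC _).differentiableAt (by simp))
      ((he.contDiffOn_symm.contDiffAt (e.open_target.mem_nhds hw')).differentiableAt (by simp)) ?_
    rw [e.left_inv (hball hw).1]
    exact hK w hw
  have hopen : IsOpen (e '' Q) :=
    e.isOpen_image_of_subset_source Metric.isOpen_ball fun w hw => (hball hw).1
  have hLd : DifferentiableOn ℂ (K ∘ e.symm) (e '' Q) :=
    fun z hz => (hL z hz).differentiableAt.differentiableWithinAt
  exact ((hLd.deriv hopen).congr fun z hz => (hL z hz).deriv.symm).differentiableAt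
    (hopen.mem_nhds (mem_image_of_mem e (Metric.mem_ball_self hρ)))

theorem IsSmoothJordanCurve.differentiableOn_of_diff_range {γ : ℝ → ℂ} (hγ : IsSmoothJordanCurve γ)
    {W : Set ℂ} (hW : IsOpen W) (hH : ContinuousOn H W)
    (hd : DifferentiableOn ℂ H (W \ range γ)) : DifferentiableOn ℂ H W := by
  intro z hz
  have hcl := hγ.isCompact_range.isClosed
  by_cases hzγ : z ∈ range γ
  · obtain ⟨θ, rfl⟩ := hzγ
    obtain ⟨e, he, hθ⟩ := hγ.exists_isStraightening θ
    exact (he.differentiableAt_of_diff_range hθ hW hz hH hd hcl).differentiableWithinAt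
  · exact (hd.differentiableAt ((hW.sdiff hcl).mem_nhds ⟨hz, hzγ⟩)).differentiableWithinAt

theorem differentiableOn_of_diff_iUnion_range {ι : Type*} [Finite ι] {γ : ι → ℝ → ℂ}
    (hγ : ∀ i, IsSmoothJordanCurve (γ i)) {W : Set ℂ} (hW : IsOpen W) (hH : ContinuousOn H W)
    (hd : DifferentiableOn ℂ H (W \ ⋃ i, range (γ i))) : DifferentiableOn ℂ H W := by
  suffices h : ∀ s : Set ι, s.Finite → DifferentiableOn ℂ H (W \ ⋃ i ∈ s, range (γ i)) →
      DifferentiableOn ℂ H W from h univ finite_univ (by simpa using hd)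
  intro s hs
  induction s, hs using Set.Finite.induction_on with
  | empty => simp
  | @insert i s _ hs ih =>
    intro h
    rw [biUnion_insert, union_comm, ← sdiff_sdiff] at h
    have hopen : IsOpen (W \ ⋃ j ∈ s, range (γ j)) :=
      hW.sdiff (hs.isClosed_biUnion fun j _ => (hγ j).isCompact_range.isClosed)
    exact ih ((hγ i).differentiableOn_of_diff_range hopen (hH.mono sdiff_subset) h)

end Removability

section Gluing

open Filter Topology

theorem exists_eqOn_of_pairwise_disjoint {ι X Y : Type*} {B : ι → Set X}
    (hdisj : Pairwise fun i j => Disjoint (B i) (B j)) (φ : ι → X → Y) (f : X → Y) :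
    ∃ h : X → Y, (∀ i, EqOn h (φ i) (B i)) ∧ EqOn h f (⋃ i, B i)ᶜ := by
  classical
  refine ⟨fun z => if hz : ∃ i, z ∈ B i then φ hz.choose z else f z, fun i z hz => ?_,
    fun z hz => dif_neg (by simpa using hz)⟩
  have hex : ∃ i, z ∈ B i := ⟨i, hz⟩
  simp only [dif_pos hex, hdisj.eq (not_disjoint_iff.2 ⟨z, hex.choose_spec, hz⟩)]

theorem continuousAt_of_eqOn_isOpen {ι X Y : Type*} [Finite ι] [TopologicalSpace X]
    [TopologicalSpace Y] {B : ι → Set X} {φ : ι → X → Y} {f h : X → Y} {z : X}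
    (hB : ∀ i, IsOpen (B i)) (hφ : ∀ i, ContinuousAt (φ i) z) (hf : ContinuousOn f (⋃ i, B i)ᶜ)
    (hhφ : ∀ i, EqOn h (φ i) (B i)) (hhf : EqOn h f (⋃ i, B i)ᶜ)
    (hfr : ∀ i, z ∈ frontier (B i) → φ i z = f z) : ContinuousAt h z := by
  by_cases hz : z ∈ ⋃ i, B i
  · obtain ⟨i, hi⟩ := mem_iUnion.1 hz
    exact (hφ i).congr ((hhφ i).symm.eventuallyEq_of_mem ((hB i).mem_nhds hi))
  rw [← continuousWithinAt_univ, ← compl_union_self (⋃ i, B i)]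
  refine ((hf z hz).congr hhf (hhf hz)).union ?_
  rw [ContinuousWithinAt, nhdsWithin_iUnion, tendsto_iSup]
  intro i
  by_cases hzi : z ∈ closure (B i)
  · have hzfr : z ∈ frontier (B i) :=
      (hB i).frontier_eq ▸ ⟨hzi, fun h => hz (mem_iUnion_of_mem i h)⟩
    exact (hφ i).continuousWithinAt.congr (hhφ i) (by rw [hhf hz, hfr i hzfr])
  · exact continuousWithinAt_of_notMem_closure hzi

theorem exists_hasCompactSupport_flatAt {E : Type*} [NormedAddCommGroup E] [NormedSpace ℝ E]
    [FiniteDimensional ℝ E] {q : E → ℂ} {S : Set E} {p : E} (hq : ContDiff ℝ (⊤ : ℕ∞) q)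
    (hflat : ∀ᶠ z in 𝓝 p, z ∈ S → FlatAt q z) :
    ∃ q₀ : E → ℂ, ContDiff ℝ (⊤ : ℕ∞) q₀ ∧ HasCompactSupport q₀ ∧ q₀ =ᶠ[𝓝 p] q ∧
      ∀ z ∈ S, FlatAt q₀ z := by
  obtain ⟨r, hr, hflat⟩ := Metric.nhds_basis_closedBall.mem_iff.1 hflat
  let χ : ContDiffBump p := ⟨r / 2, r, half_pos hr, half_lt_self hr⟩
  have hχ : ContDiff ℝ (⊤ : ℕ∞) fun z => (χ z : ℂ) := ofRealCLM.contDiff.comp χ.contDiff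
  have hχ_supp : HasCompactSupport fun z => (χ z : ℂ) := χ.hasCompactSupport.comp_left ofReal_zero
  refine ⟨fun z => q z * χ z, hq.mul hχ, hχ_supp.mul_left, ?_, fun z hz => ?_⟩
  · filter_upwards [χ.eventuallyEq_one] with z hz
    simp [hz]
  · by_cases hzr : z ∈ Metric.closedBall p r
    · exact (hflat hzr hz).mul hq.contDiffAt hχ.contDiffAt
    · refine flatAt_of_notMem_tsupport fun hzt => hzr ?_
      have hzχ := closure_mono ((Function.support_mul_subset_right _ _).trans
        (Function.support_comp_subset ofReal_zero χ)) hzt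
      exact χ.tsupport_eq ▸ hzχ

theorem exists_contDiff_dbar_eventually_eq {ι : Type*} [Finite ι] {B : ι → Set ℂ}
    (hdisj : Pairwise fun i j => Disjoint (B i) (B j)) {q : ι → ℂ → ℂ}
    (hq : ∀ i, ContDiff ℝ (⊤ : ℕ∞) (q i)) {p : ℂ}
    (hflat : ∀ i, ∀ᶠ z in 𝓝 p, z ∈ frontier (B i) → FlatAt (q i) z) :
    ∃ v : ℂ → ℂ, ContDiff ℝ (⊤ : ℕ∞) v ∧
      ∀ᶠ z in 𝓝 p, (∀ i, z ∈ B i → dbar v z = q i z) ∧ (z ∉ ⋃ i, B i → dbar v z = 0) := by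
  have := Fintype.ofFinite ι
  choose q₀ hq₀ hsupp hq₀q hflat₀ using fun i => exists_hasCompactSupport_flatAt (hq i) (hflat i)
  have hsmooth : ContDiff ℝ (⊤ : ℕ∞) fun z => ∑ i, (B i).indicator (q₀ i) z :=
    .sum fun i _ => contDiff_indicator_of_flatAt_frontier (hq₀ i) (hflat₀ i)
  have hcompact : HasCompactSupport (∑ i, (B i).indicator (q₀ i)) :=
    .finset_sum fun i _ => (hsupp i).mono (support_indicator.trans_subset inter_subset_right)
  rw [Finset.sum_fn] at hcompact
  obtain ⟨v, hv, hvq⟩ := exists_contDiff_dbar_eq hsmooth hcompact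
  refine ⟨v, hv, ?_⟩
  filter_upwards [eventually_all.2 hq₀q] with z hz
  refine ⟨fun i hi => ?_, fun hzB => (hvq z).trans (Finset.sum_eq_zero fun i _ =>
    indicator_of_notMem (fun hi => hzB (mem_iUnion_of_mem i hi)) _)⟩
  rw [hvq, Finset.sum_eq_single i (fun j _ hji => indicator_of_notMem
    (fun hj => disjoint_left.1 (hdisj hji) hj hi) _) (by simp), indicator_of_mem hi, hz]

theorem differentiableAt_sub_of_dbar_eq {h ψ v : ℂ → ℂ} {z : ℂ} (hh : h =ᶠ[𝓝 z] ψ)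
    (hψ : DifferentiableAt ℝ ψ z) (hv : DifferentiableAt ℝ v z) (hd : dbar v z = dbar ψ z) :
    DifferentiableAt ℂ (h - v) z := by
  refine DifferentiableAt.congr_of_eventuallyEq ?_ (hh.sub .rfl)
  rw [differentiableAt_complex_iff_dbar_eq_zero]
  refine ⟨hψ.sub hv, ?_⟩
  rw [dbar, fderiv_sub hψ hv, map_sub, ← dbar, ← dbar, hd, sub_self]

variable {ι : Type*} [Finite ι] {γ : ι → ℝ → ℂ} {B : ι → Set ℂ} {f : ℂ → ℂ}

theorem differentiableOn_sub_diff_iUnion_range {h v : ℂ → ℂ} {φ : ι → ℂ → ℂ} {W : Set ℂ}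
    (hB : ∀ i, IsOpen (B i)) (hBγ : ∀ i, frontier (B i) ⊆ range (γ i))
    (hf : DifferentiableOn ℂ f (interior (⋃ i, B i)ᶜ))
    (hφ : ∀ i, Differentiable ℝ (φ i)) (hv : Differentiable ℝ v)
    (hhφ : ∀ i, EqOn h (φ i) (B i)) (hhf : EqOn h f (⋃ i, B i)ᶜ)
    (hvφ : ∀ z ∈ W, ∀ i, z ∈ B i → dbar v z = dbar (φ i) z)
    (hvf : ∀ z ∈ W, z ∉ ⋃ i, B i → dbar v z = 0) :
    DifferentiableOn ℂ (h - v) (W \ ⋃ i, range (γ i)) := by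
  rintro z ⟨hzW, hzγ⟩
  refine DifferentiableAt.differentiableWithinAt ?_
  by_cases hz : z ∈ ⋃ i, B i
  · obtain ⟨i, hi⟩ := mem_iUnion.1 hz
    exact differentiableAt_sub_of_dbar_eq ((hhφ i).eventuallyEq_of_mem ((hB i).mem_nhds hi))
      (hφ i z) (hv z) (hvφ z hzW i hi)
  · have hzint : z ∈ interior (⋃ i, B i)ᶜ := by
      rw [interior_compl, closure_iUnion_of_finite, mem_compl_iff, mem_iUnion]
      rintro ⟨i, hi⟩
      refine hzγ (mem_iUnion_of_mem i (hBγ i ?_))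
      exact (hB i).frontier_eq ▸ ⟨hi, fun h => hz (mem_iUnion_of_mem i h)⟩
    have hint := isOpen_interior.mem_nhds hzint
    have hfz := hf.differentiableAt hint
    refine differentiableAt_sub_of_dbar_eq
      (hhf.eventuallyEq_of_mem (mem_of_superset hint interior_subset))
      (hfz.restrictScalars ℝ) (hv z) ?_
    rw [hvf z hzW hz, dbar_eq_zero_of_differentiableAt hfz]

theorem exists_contDiffOn_eqOn_inter_compl_iUnion (hγ : ∀ i, IsSmoothJordanCurve (γ i))
    (hB : ∀ i, IsOpen (B i)) (hdisj : Pairwise fun i j => Disjoint (B i) (B j))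
    (hBγ : ∀ i, frontier (B i) ⊆ range (γ i)) (hf : ContinuousOn f (⋃ i, B i)ᶜ)
    (hf' : DifferentiableOn ℂ f (interior (⋃ i, B i)ᶜ))
    (hfγ : ∀ i, ContDiff ℝ (⊤ : ℕ∞) fun θ => f (γ i θ)) (p : ℂ) :
    ∃ V ∈ 𝓝 p, ∃ g : ℂ → ℂ, ContDiffOn ℝ (⊤ : ℕ∞) g V ∧ EqOn g f (V ∩ (⋃ i, B i)ᶜ) := by
  choose φ hφ hφp using fun i => (hγ i).exists_local_extension (hfγ i) p
  obtain ⟨v, hv, hvp⟩ := exists_contDiff_dbar_eventually_eq hdisj (fun i => contDiff_dbar (hφ i))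
    fun i => (hφp i).mono fun z hz hzB => (hz (hBγ i hzB)).2
  obtain ⟨h, hhφ, hhf⟩ := exists_eqOn_of_pairwise_disjoint hdisj φ f
  obtain ⟨r, hr, hball⟩ := Metric.eventually_nhds_iff_ball.1 ((eventually_all.2 hφp).and hvp)
  have hcont : ContinuousOn (h - v) (Metric.ball p r) := fun z hz =>
    ((continuousAt_of_eqOn_isOpen hB (fun i => (hφ i).continuous.continuousAt) hf hhφ hhf
      fun i hi => ((hball z hz).1 i (hBγ i hi)).1).sub
        hv.continuous.continuousAt).continuousWithinAt
  have hhol : DifferentiableOn ℂ (h - v) (Metric.ball p r) :=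
    differentiableOn_of_diff_iUnion_range hγ Metric.isOpen_ball hcont
      (differentiableOn_sub_diff_iUnion_range hB hBγ hf'
        (fun i => (hφ i).differentiable (by simp)) (hv.differentiable (by simp)) hhφ hhf
        (fun z hz => (hball z hz).2.1) fun z hz => (hball z hz).2.2)
  have hsmooth : ContDiffOn ℝ (⊤ : ℕ∞) (h - v) (Metric.ball p r) :=
    (hhol.contDiffOn Metric.isOpen_ball).restrict_scalars ℝ
  exact ⟨Metric.ball p r, Metric.ball_mem_nhds p hr, h,
    by simpa using hsmooth.add hv.contDiffOn, fun z hz => hhf hz.2⟩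

open Manifold in
theorem exists_contDiff_eqOn_of_local {E F : Type*} [NormedAddCommGroup E] [NormedSpace ℝ E]
    [FiniteDimensional ℝ E] [NormedAddCommGroup F] [NormedSpace ℝ F] {A : Set E} {f : E → F}
    (hloc : ∀ p, ∃ V ∈ 𝓝 p, ∃ g : E → F, ContDiffOn ℝ (⊤ : ℕ∞) g V ∧ EqOn g f (V ∩ A)) :
    ∃ F₀ : E → F, ContDiff ℝ (⊤ : ℕ∞) F₀ ∧ EqOn F₀ f A := by
  have hconvex (x : E) : Convex ℝ {y | x ∈ A → y = f x} := by
    by_cases hx : x ∈ A <;> simp [hx, convex_univ]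
  obtain ⟨F₀, hF₀⟩ := exists_contMDiffMap_forall_mem_convex_of_local (n := (⊤ : ℕ∞)) 𝓘(ℝ, E)
    hconvex fun p => by
      obtain ⟨V, hV, g, hg, hgf⟩ := hloc p
      exact ⟨V, hV, g, hg.contMDiffOn, fun y hy hyA => hgf ⟨hy, hyA⟩⟩
  exact ⟨F₀, F₀.contMDiff.contDiff, hF₀⟩

theorem holomorphic_function_on_annulus_extends_smoothly_general
    (hγ : ∀ i, IsSmoothJordanCurve (γ i)) (hB : ∀ i, IsOpen (B i))
    (hdisj : Pairwise fun i j => Disjoint (B i) (B j))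
    (hBγ : ∀ i, frontier (B i) ⊆ range (γ i)) (hf : ContinuousOn f (⋃ i, B i)ᶜ)
    (hf' : DifferentiableOn ℂ f (interior (⋃ i, B i)ᶜ))
    (hfγ : ∀ i, ContDiff ℝ (⊤ : ℕ∞) fun θ => f (γ i θ)) :
    ∃ F : ℂ → ℂ, ContDiff ℝ (⊤ : ℕ∞) F ∧ EqOn F f (⋃ i, B i)ᶜ :=
  exists_contDiff_eqOn_of_local
    (exists_contDiffOn_eqOn_inter_compl_iUnion hγ hB hdisj hBγ hf hf' hfγ)

theorem frontier_subset_of_closure_eq_union {X : Type*} [TopologicalSpace X] {B S : Set X}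
    (hB : IsOpen B) (hcl : closure B = B ∪ S) : frontier B ⊆ S := by
  rw [hB.frontier_eq, hcl, union_sdiff_left]
  exact sdiff_subset

end Gluing

theorem holomorphic_function_on_annulus_extends_smoothly
    (γin γout : ℝ → ℂ) (Bin Bout : Set ℂ)
    (hγin_smooth : ContDiff ℝ (⊤ : ℕ∞) γin)
    (hγout_smooth : ContDiff ℝ (⊤ : ℕ∞) γout)
    (hγin_per : ∀ θ, γin (θ + 2 * π) = γin θ)
    (hγout_per : ∀ θ, γout (θ + 2 * π) = γout θ)
    (hγin_inj : InjOn γin (Ico 0 (2 * π)))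
    (hγout_inj : InjOn γout (Ico 0 (2 * π)))
    (hγin_deriv : ∀ θ, deriv γin θ ≠ 0)
    (hγout_deriv : ∀ θ, deriv γout θ ≠ 0)
    (hBin_conn : IsConnected Bin) (hBin_open : IsOpen Bin)
    (hBin_bdd : Bornology.IsBounded Bin)
    (hin_two : ∃ U : Set ℂ, IsConnected U ∧ IsOpen U ∧ ¬ Bornology.IsBounded U ∧
      Disjoint Bin U ∧ Bin ∪ U = (range γin)ᶜ)
    (hBin_cl : closure Bin = Bin ∪ range γin)
    (hBout_conn : IsConnected Bout) (hBout_open : IsOpen Bout)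
    (hBout_bdd : Bornology.IsBounded Bout)
    (hout_two : ∃ U : Set ℂ, IsConnected U ∧ IsOpen U ∧ ¬ Bornology.IsBounded U ∧
      Disjoint Bout U ∧ Bout ∪ U = (range γout)ᶜ)
    (hBout_cl : closure Bout = Bout ∪ range γout)
    (hwind_in : ∀ z ∈ Bin,
      (2 * π * I)⁻¹ * ∫ θ in (0:ℝ)..(2 * π), deriv γin θ / (γin θ - z) = 1)
    (hwind_out : ∀ z ∈ Bout,
      (2 * π * I)⁻¹ * ∫ θ in (0:ℝ)..(2 * π), deriv γout θ / (γout θ - z) = 1)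
    (hsub : Bin ∪ range γin ⊆ Bout ∪ range γout)
    (A : Set ℂ) (hA : A = (Bout ∪ range γout) \ Bin)
    (f : ℂ → ℂ)
    (hf_cont : ContinuousOn f A)
    (hf_holo : DifferentiableOn ℂ f (interior A))
    (hf_in : ContDiff ℝ (⊤ : ℕ∞) (fun θ : ℝ => f (γin θ)))
    (hf_out : ContDiff ℝ (⊤ : ℕ∞) (fun θ : ℝ => f (γout θ))) :
    ∃ F : ℂ → ℂ, ContDiff ℝ (⊤ : ℕ∞) F ∧ EqOn F f A := by
  have hA' : A = (⋃ b, bif b then (closure Bout)ᶜ else Bin)ᶜ := by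
    rw [← union_eq_iUnion, compl_union, compl_compl, hA, hBout_cl, sdiff_eq]
  have hdisj : Disjoint (closure Bout)ᶜ Bin :=
    disjoint_compl_left_iff_subset.2 (subset_union_left.trans (hsub.trans hBout_cl.ge))
  subst hA'
  refine holomorphic_function_on_annulus_extends_smoothly_general
    (γ := fun b => bif b then γout else γin) (Bool.forall_bool.2 ⟨?_, ?_⟩)
    (Bool.forall_bool.2 ⟨hBin_open, isClosed_closure.isOpen_compl⟩)
    (by simpa [Pairwise] using ⟨hdisj.symm, hdisj⟩) (Bool.forall_bool.2 ⟨?_, ?_⟩) hf_cont hf_holo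
    (Bool.forall_bool.2 ⟨hf_in, hf_out⟩)
  · exact ⟨hγin_smooth, hγin_per, hγin_inj, hγin_deriv⟩
  · exact ⟨hγout_smooth, hγout_per, hγout_inj, hγout_deriv⟩
  · exact frontier_subset_of_closure_eq_union hBin_open hBin_cl
  · exact (frontier_compl (closure Bout)).trans_subset
      (frontier_closure_subset.trans (frontier_subset_of_closure_eq_union hBout_open hBout_cl))
end
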